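/- arXiv:2105.13359 — 2 statements merged into one kernel-verified Lean document; each statement's English description precedes it below -/
import Mathlib

section
/- Closed formula for the string order parameter (BDI). Assume BDI data (any n_P ∈ ℤ, n_z, n_Z ≥ 0; no genericity assumption). Then the limit lim_{N→∞} |D_N[t_ω]| exists and equals ∏_{j1=1}^{n_z} ∏_{j2=1}^{n_z} (1 − z_{j1} z_{j2}) · ∏_{k1=1}^{n_Z} ∏_{k2=1}^{n_Z} (1 − (Z_{k1} Z_{k2})^{-1}) / ∏_{j=1}^{n_z} ∏_{k=1}^{n_Z} (1 − z_j/Z_k)², where ω = 2 n_z − n_P; in particular this product is a nonnegative real number. -/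
open scoped BigOperators
open Filter

/-- The `k`-th Fourier coefficient of a symbol `t` on the unit circle. -/
noncomputable def symbolCoeff (t : ℂ → ℂ) (k : ℤ) : ℂ :=
  (1 / (2 * Real.pi)) *
    ∫ θ in (0:ℝ)..(2 * Real.pi),
      t (Complex.exp (Complex.I * (θ : ℂ))) * Complex.exp (-(Complex.I * (k : ℂ) * (θ : ℂ)))

/-- The `N × N` Toeplitz determinant `D_N[t]` generated by the symbol `t`. -/
noncomputable def toeplitzDet (t : ℂ → ℂ) (N : ℕ) : ℂ :=
  Matrix.det (Matrix.of fun m n : Fin N => symbolCoeff t ((m : ℤ) - (n : ℤ)))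

/-- The BDI string symbol `t_α`. -/
noncomputable def bdiSymbol (nP : ℤ) (nz nZ : ℕ) (z : Fin nz → ℂ) (Z : Fin nZ → ℂ)
    (α : ℤ) (w : ℂ) : ℂ :=
  w ^ ((nz : ℤ) + (nZ : ℤ) - nP - α) * (∏ k, (-Z k))⁻¹ *
    ((∏ j, (w - z j)) * (∏ k, (w - Z k))) /
    ((∏ j, (1 - w * z j)) * (∏ k, (w - (Z k)⁻¹)))

/-!
On the unit circle the string symbol factors as `b(w⁻¹) * a(w)`, where `a` and `b` are analytic and
zero-free on the closed unit disc. Multiplying the Toeplitz matrix of such a symbol by the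
unitriangular Toeplitz matrices of `1 / a` and `1 / b` leaves the identity minus a product whose
columns have summable norms, so by Cramer's rule determinants with a modified last column stay
bounded. Consequently, multiplying `a` by `1 - x * w` with `‖x‖ < 1` multiplies the determinants
asymptotically by the value of `1 / b` at `x`, the error being controlled by the tail of the
coefficients of `1 / b`. Adding the factors of `a` one at a time to the triangular case `a = 1`
gives the limit.
-/

open PowerSeries Topology

/-- The `n × n` Toeplitz matrix `(t (i - j))` of a bi-infinite sequence `t`. -/
def toeplitz {R : Type*} (t : ℤ → R) (n : ℕ) : Matrix (Fin n) (Fin n) R :=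
  Matrix.of fun i j => t ((i : ℤ) - (j : ℤ))

@[simp]
theorem toeplitz_apply {R : Type*} (t : ℤ → R) {n : ℕ} (i j : Fin n) :
    toeplitz t n i j = t ((i : ℤ) - j) :=
  rfl

section Toeplitz

variable {R : Type*} [CommRing R]

/-- The coefficients of a power series, extended by zero to negative indices. -/
noncomputable def intCoeff (a : PowerSeries R) (n : ℤ) : R :=
  (a : LaurentSeries R).coeff n

@[simp]
theorem intCoeff_natCast (a : PowerSeries R) (n : ℕ) : intCoeff a n = coeff n a :=
  LaurentSeries.coeff_coe_powerSeries a n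

@[simp]
theorem intCoeff_zero (a : PowerSeries R) : intCoeff a 0 = constantCoeff a :=
  (intCoeff_natCast a 0).trans (coeff_zero_eq_constantCoeff_apply a)

theorem intCoeff_of_neg (a : PowerSeries R) {n : ℤ} (hn : n < 0) : intCoeff a n = 0 := by
  rw [intCoeff, coeff_coe, if_pos hn]

theorem intCoeff_sub_natCast (a : PowerSeries R) (i j : ℕ) :
    intCoeff a (i - j) = if j ≤ i then coeff (i - j) a else 0 := by
  split_ifs with h
  · rw [← Nat.cast_sub h, intCoeff_natCast]
  · exact intCoeff_of_neg a (by omega)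

theorem intCoeff_one (n : ℤ) : intCoeff (1 : PowerSeries R) n = if n = 0 then 1 else 0 := by
  simp [intCoeff, HahnSeries.coeff_one]

theorem intCoeff_one_sub_C_mul_X_mul (x : R) (a : PowerSeries R) (n : ℤ) :
    intCoeff ((1 - C x * X) * a) n = intCoeff a n - x * intCoeff a (n - 1) := by
  rcases lt_trichotomy n 0 with hn | rfl | hn
  · simp [intCoeff_of_neg _ hn, intCoeff_of_neg _ (show n - 1 < 0 by omega)]
  · rw [intCoeff_of_neg a (n := 0 - 1) (by omega), intCoeff_zero, intCoeff_zero]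
    simp
  · obtain ⟨m, rfl⟩ : ∃ m : ℕ, n = (m + 1 : ℕ) := ⟨(n - 1).toNat, by omega⟩
    rw [show ((m + 1 : ℕ) : ℤ) - 1 = m by push_cast; ring]
    simp only [intCoeff_natCast, sub_mul, one_mul, mul_assoc, map_sub, coeff_C_mul,
      coeff_succ_X_mul]

theorem toeplitz_intCoeff_mul (a b : PowerSeries R) (n : ℕ) :
    toeplitz (intCoeff a) n * toeplitz (intCoeff b) n = toeplitz (intCoeff (a * b)) n := by
  ext i j
  rw [Matrix.mul_apply]
  simp only [toeplitz_apply]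
  rw [Fin.sum_univ_eq_sum_range (fun k => intCoeff a (i - k) * intCoeff b (k - j)) n,
    intCoeff_sub_natCast]
  simp only [intCoeff_sub_natCast]
  split_ifs with hij
  · rw [coeff_mul]
    refine (Finset.sum_of_injOn (fun p => p.2 + (j : ℕ)) ?_ ?_ ?_ ?_).symm
    · intro p hp q hq h
      simp only [Finset.mem_coe, Finset.HasAntidiagonal.mem_antidiagonal] at hp hq h
      ext <;> omega
    · intro p hp
      simp only [Finset.mem_coe, Finset.HasAntidiagonal.mem_antidiagonal, Finset.mem_range] at hp ⊢
      omega
    · intro k _ hk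
      contrapose! hk
      have hk' : k ≤ i ∧ (j : ℕ) ≤ k := by
        constructor <;> by_contra h <;> simp [h] at hk
      refine ⟨((i : ℕ) - k, k - j), ?_, Nat.sub_add_cancel hk'.2⟩
      simp only [Finset.mem_coe, Finset.HasAntidiagonal.mem_antidiagonal]
      omega
    · intro p hp
      have hp := Finset.HasAntidiagonal.mem_antidiagonal.1 hp
      rw [if_pos (by omega), if_pos (by omega), Nat.add_sub_cancel]
      congr 3
      omega
  · refine Finset.sum_eq_zero fun k _ => ?_
    split_ifs <;> first | omega | simp

theorem toeplitz_intCoeff_one (n : ℕ) : toeplitz (intCoeff (1 : PowerSeries R)) n = 1 := by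
  ext i j
  simp [intCoeff_one, Matrix.one_apply, sub_eq_zero, Fin.ext_iff]

theorem det_toeplitz_intCoeff (a : PowerSeries R) (n : ℕ) :
    (toeplitz (intCoeff a) n).det = constantCoeff a ^ n := by
  rw [Matrix.det_of_isLowerTriangular]
  · simp
  · intro i j hij
    exact intCoeff_of_neg a (sub_neg.2 (by exact_mod_cast hij))

end Toeplitz

/-- `∑ (n + 1) ^ k * ‖aₙ‖ < ∞`; for `k = 0` this is absolute summability of the coefficients. -/
def MomentSummable (k : ℕ) (a : PowerSeries ℂ) : Prop :=
  Summable fun n : ℕ => ((n : ℝ) + 1) ^ k * ‖coeff n a‖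

namespace MomentSummable

variable {k : ℕ} {a b : PowerSeries ℂ} {x w : ℂ}

theorem summable_norm (ha : MomentSummable k a) : Summable fun n => ‖coeff n a‖ :=
  ha.of_nonneg_of_le (fun _ => norm_nonneg _) fun n =>
    le_mul_of_one_le_left (norm_nonneg _) (one_le_pow₀ (by simp))

theorem mul (ha : MomentSummable k a) (hb : MomentSummable k b) : MomentSummable k (a * b) := by
  have h := summable_sum_mul_antidiagonal_of_summable_mul
    (Summable.mul_of_nonneg ha hb (fun _ => by positivity) fun _ => by positivity)
  refine h.of_nonneg_of_le (fun n => by positivity) fun n => ?_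
  rw [coeff_mul]
  calc ((n : ℝ) + 1) ^ k *
        ‖∑ p ∈ Finset.HasAntidiagonal.antidiagonal n, coeff p.1 a * coeff p.2 b‖
      ≤ ((n : ℝ) + 1) ^ k *
          ∑ p ∈ Finset.HasAntidiagonal.antidiagonal n, ‖coeff p.1 a‖ * ‖coeff p.2 b‖ := by
        gcongr
        exact (norm_sum_le _ _).trans (Finset.sum_le_sum fun p _ => norm_mul_le _ _)
    _ = ∑ p ∈ Finset.HasAntidiagonal.antidiagonal n,
          ((n : ℝ) + 1) ^ k * (‖coeff p.1 a‖ * ‖coeff p.2 b‖) := Finset.mul_sum ..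
    _ ≤ _ := Finset.sum_le_sum fun p hp => ?_
  have hn : (n : ℝ) + 1 ≤ (p.1 + 1) * (p.2 + 1) := by
    rw [← Finset.HasAntidiagonal.mem_antidiagonal.1 hp]
    push_cast
    nlinarith [mul_nonneg p.1.cast_nonneg' (α := ℝ) p.2.cast_nonneg']
  rw [mul_mul_mul_comm, ← mul_pow]
  gcongr

theorem one : MomentSummable k 1 :=
  summable_of_ne_finset_zero (s := {0}) fun n hn => by simp_all [coeff_one]

theorem one_sub_C_mul_X (x : ℂ) : MomentSummable k (1 - C x * X) :=
  summable_of_ne_finset_zero (s := {0, 1}) fun n hn => by simp_all [coeff_one, coeff_X]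

theorem mk_pow (hx : ‖x‖ < 1) : MomentSummable k (mk fun n => x ^ n) := by
  simp only [MomentSummable, coeff_mk, norm_pow, add_pow, one_pow, mul_one, Finset.sum_mul]
  refine summable_sum fun j _ => ?_
  refine ((summable_pow_mul_geometric_of_norm_lt_one j (r := ‖x‖) (by simpa)).mul_left
    (k.choose j : ℝ)).congr fun n => ?_
  ring

theorem prod {ι : Type*} {s : Finset ι} {f : ι → PowerSeries ℂ}
    (h : ∀ i ∈ s, MomentSummable k (f i)) : MomentSummable k (∏ i ∈ s, f i) :=
  Finset.prod_induction _ _ (fun _ _ => mul) one h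

theorem summable_eval (ha : MomentSummable k a) (hw : ‖w‖ ≤ 1) :
    Summable fun n => ‖coeff n a * w ^ n‖ := by
  refine ha.summable_norm.of_nonneg_of_le (fun n => norm_nonneg _) fun n => ?_
  rw [norm_mul, norm_pow]
  exact mul_le_of_le_one_right (norm_nonneg _) (pow_le_one₀ (norm_nonneg _) hw)

end MomentSummable

/-- The value at `w` of a power series, defined as the sum of its terms (junk value `0` where they
are not summable). -/
noncomputable def evalAt (w : ℂ) (a : PowerSeries ℂ) : ℂ :=
  ∑' n, coeff n a * w ^ n

section EvalAt

variable {k l : ℕ} {a b : PowerSeries ℂ} {x w : ℂ}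

theorem MomentSummable.hasSum_evalAt (ha : MomentSummable k a) (hw : ‖w‖ ≤ 1) :
    HasSum (fun n => coeff n a * w ^ n) (evalAt w a) :=
  (ha.summable_eval hw).of_norm.hasSum

theorem evalAt_one (w : ℂ) : evalAt w 1 = 1 := by
  rw [evalAt, tsum_eq_single 0 fun n hn => by simp [coeff_one, hn]]
  simp

theorem evalAt_mul (ha : MomentSummable k a) (hb : MomentSummable l b) (hw : ‖w‖ ≤ 1) :
    evalAt w (a * b) = evalAt w a * evalAt w b := by
  rw [evalAt, evalAt, evalAt, tsum_mul_tsum_eq_tsum_sum_antidiagonal_of_summable_norm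
    (ha.summable_eval hw) (hb.summable_eval hw)]
  refine tsum_congr fun n => ?_
  rw [coeff_mul, Finset.sum_mul]
  refine Finset.sum_congr rfl fun p hp => ?_
  rw [← Finset.HasAntidiagonal.mem_antidiagonal.1 hp, pow_add, mul_mul_mul_comm]

theorem evalAt_ne_zero_of_mul_eq_one (ha : MomentSummable k a) (hb : MomentSummable l b)
    (hab : a * b = 1) (hw : ‖w‖ ≤ 1) : evalAt w a ≠ 0 :=
  left_ne_zero_of_mul_eq_one (b := evalAt w b) (by rw [← evalAt_mul ha hb hw, hab, evalAt_one])

theorem evalAt_prod {ι : Type*} {s : Finset ι} {f : ι → PowerSeries ℂ}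
    (h : ∀ i ∈ s, MomentSummable k (f i)) (hw : ‖w‖ ≤ 1) :
    evalAt w (∏ i ∈ s, f i) = ∏ i ∈ s, evalAt w (f i) := by
  classical
  induction s using Finset.induction_on with
  | empty => exact evalAt_one w
  | insert i s hi ih =>
    rw [Finset.forall_mem_insert] at h
    rw [Finset.prod_insert hi, Finset.prod_insert hi, evalAt_mul h.1 (.prod h.2) hw, ih h.2]

theorem evalAt_one_sub_C_mul_X (x w : ℂ) : evalAt w (1 - C x * X) = 1 - x * w := by
  rw [evalAt, tsum_eq_sum (s := {0, 1}) fun n hn => by simp_all [coeff_one, coeff_X]]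
  simp [coeff_one, coeff_X, sub_eq_add_neg]

theorem evalAt_mk_pow (hx : ‖x‖ < 1) (hw : ‖w‖ ≤ 1) :
    evalAt w (mk fun n => x ^ n) = (1 - x * w)⁻¹ := by
  rw [← tsum_geometric_of_norm_lt_one (norm_mul x w ▸ mul_lt_one_of_nonneg_of_lt_one_left
    (norm_nonneg x) hx hw)]
  simp only [evalAt, coeff_mk, mul_pow]

end EvalAt

/-- The `ℓ¹` norm of the coefficients of index greater than `j`. -/
noncomputable def coeffTail (a : PowerSeries ℂ) (j : ℕ) : ℝ :=
  ∑' q, ‖coeff (j + 1 + q) a‖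

section CoeffTail

variable {k : ℕ} {a : PowerSeries ℂ}

theorem coeffTail_nonneg (a : PowerSeries ℂ) (j : ℕ) : 0 ≤ coeffTail a j :=
  tsum_nonneg fun _ => norm_nonneg _

theorem MomentSummable.summable_norm_tail (ha : MomentSummable k a) (j : ℕ) :
    Summable fun q => ‖coeff (j + 1 + q) a‖ := by
  simpa only [add_comm] using (summable_nat_add_iff (j + 1)).2 ha.summable_norm

-- The coefficient of index `n + 1` occurs in exactly `n + 1` tails.
theorem summable_coeffTail (ha : MomentSummable 1 a) : Summable (coeffTail a) := by
  suffices key : Summable fun p : ℕ × ℕ => ‖coeff (p.1 + 1 + p.2) a‖ from key.prod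
  rw [← (Finset.HasAntidiagonal.sigmaAntidiagonalEquivProd (A := ℕ)).summable_iff]
  refine (summable_sigma_of_nonneg fun _ => norm_nonneg _).2
    ⟨fun n => (hasSum_fintype _).summable, ?_⟩
  refine ((summable_nat_add_iff 1).2 ha).of_nonneg_of_le
    (fun n => tsum_nonneg fun _ => norm_nonneg _) fun n => ?_
  have hp (p : Finset.HasAntidiagonal.antidiagonal n) :
      ‖coeff ((p : ℕ × ℕ).1 + 1 + (p : ℕ × ℕ).2) a‖ = ‖coeff (n + 1) a‖ := by
    rw [add_right_comm, Finset.HasAntidiagonal.mem_antidiagonal.1 p.2]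
  simp only [tsum_fintype,
    Finset.HasAntidiagonal.sigmaAntidiagonalEquivProd_apply, hp, Finset.sum_const,
    Finset.card_univ, Fintype.card_coe, Finset.Nat.card_antidiagonal, nsmul_eq_mul, pow_one]
  gcongr
  simp

end CoeffTail

/-- The coefficient sequence of `b(w⁻¹) * s(w)`, where `s(w) = ∑ sₙ wⁿ` is a Laurent series. -/
noncomputable def mulReflect (b : PowerSeries ℂ) (s : ℤ → ℂ) (n : ℤ) : ℂ :=
  ∑' m : ℕ, coeff m b * s (n + m)

section MulReflect

variable {k l : ℕ} {b c : PowerSeries ℂ} {s : ℤ → ℂ}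

theorem mulReflect_one (s : ℤ → ℂ) : mulReflect 1 s = s := by
  funext n
  rw [mulReflect, tsum_eq_single 0 fun m hm => by simp [coeff_one, hm]]
  simp

theorem summable_mulReflect_terms (hb : MomentSummable k b) {K : ℝ} (hs : ∀ n, ‖s n‖ ≤ K)
    (n : ℤ) : Summable fun m : ℕ => coeff m b * s (n + m) :=
  .of_norm_bounded (hb.summable_norm.mul_right K) fun m => by
    rw [norm_mul]
    gcongr
    exact hs _

theorem mulReflect_mulReflect (hb : MomentSummable k b) (hc : MomentSummable l c) {K : ℝ}
    (hs : ∀ n, ‖s n‖ ≤ K) : mulReflect b (mulReflect c s) = mulReflect (b * c) s := by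
  funext n
  set g : ℕ × ℕ → ℂ := fun p => coeff p.1 b * coeff p.2 c * s (n + (p.1 + p.2 : ℕ)) with hg
  have hsum : Summable g := by
    refine .of_norm_bounded ((Summable.mul_of_nonneg hb.summable_norm hc.summable_norm
      (fun _ => norm_nonneg _) fun _ => norm_nonneg _).mul_right K) fun p => ?_
    rw [hg, norm_mul, norm_mul]
    gcongr
    exact hs _
  calc mulReflect b (mulReflect c s) n = ∑' q, ∑' m, g (q, m) := tsum_congr fun q => by
        rw [mulReflect, ← tsum_mul_left]
        exact tsum_congr fun m => by rw [hg]; push_cast; ring_nf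
    _ = ∑' p, g p := (hsum.tsum_prod' hsum.prod_factor).symm
    _ = ∑' r, ∑' p : Finset.HasAntidiagonal.antidiagonal r, g p := by
        rw [← Finset.HasAntidiagonal.sigmaAntidiagonalEquivProd.tsum_eq g]
        exact Summable.tsum_sigma' (fun r => (hasSum_fintype _).summable)
          (Finset.HasAntidiagonal.sigmaAntidiagonalEquivProd.summable_iff.2 hsum)
    _ = mulReflect (b * c) s n := tsum_congr fun r => by
        rw [tsum_fintype, Finset.sum_coe_sort _ g, coeff_mul, Finset.sum_mul]
        exact Finset.sum_congr rfl fun p hp => by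
          rw [hg, ← Finset.HasAntidiagonal.mem_antidiagonal.1 hp]

theorem mulReflect_sub_mul_shift (hb : MomentSummable k b) {K : ℝ} (hs : ∀ n, ‖s n‖ ≤ K) (x : ℂ)
    (n : ℤ) : mulReflect b (fun n => s n - x * s (n - 1)) n =
      mulReflect b s n - x * mulReflect b s (n - 1) := by
  rw [mulReflect, mulReflect, mulReflect, ← tsum_mul_left,
    ← (summable_mulReflect_terms hb hs n).tsum_sub
      ((summable_mulReflect_terms hb hs (n - 1)).mul_left x)]
  exact tsum_congr fun m => by ring_nf

theorem summable_mulReflect_prod (hb : MomentSummable k b) (hs : Summable fun n => ‖s n‖) :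
    Summable fun p : ℤ × ℕ => ‖coeff p.2 b * s (p.1 + p.2)‖ := by
  have h := Summable.mul_of_nonneg hb.summable_norm hs (fun _ => norm_nonneg _)
    fun _ => norm_nonneg _
  refine ((((Equiv.refl ℕ).prodShear fun m => Equiv.addRight (m : ℤ)).summable_iff.2 h).prod_symm
    ).congr fun p => ?_
  simp

theorem summable_norm_mulReflect (hb : MomentSummable k b) (hs : Summable fun n => ‖s n‖) :
    Summable fun n => ‖mulReflect b s n‖ := by
  have h := summable_mulReflect_prod hb hs
  exact h.prod.of_nonneg_of_le (fun _ => norm_nonneg _) fun n =>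
    norm_tsum_le_tsum_norm (h.prod_factor n)

theorem hasSum_mulReflect_mul_zpow (hb : MomentSummable k b) (hs : Summable fun n => ‖s n‖)
    {w S : ℂ} (hw : ‖w‖ = 1) (hS : HasSum (fun n => s n * w ^ n) S) :
    HasSum (fun n => mulReflect b s n * w ^ n) (evalAt w⁻¹ b * S) := by
  have hw0 : w ≠ 0 := norm_ne_zero_iff.1 (hw ▸ one_ne_zero)
  have hw' : ‖w⁻¹‖ ≤ 1 := by simp [hw]
  have hsw : Summable fun n : ℤ => ‖s n * w ^ n‖ := by simpa [hw] using hs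
  have hprod := summable_mul_of_summable_norm (hb.summable_eval hw') hsw
  have h := (hb.hasSum_evalAt hw').mul hS hprod
  let e : ℤ × ℕ ≃ ℕ × ℤ := (Equiv.prodComm ℤ ℕ).trans
    ((Equiv.refl ℕ).prodShear fun m => Equiv.addRight (m : ℤ))
  refine (e.hasSum_iff.2 h).prod_fiberwise fun n => ?_
  refine (((summable_mulReflect_prod hb hs).of_norm.prod_factor n).hasSum.mul_right
    (w ^ n)).congr_fun fun m => ?_
  have he : e (n, m) = (m, n + m) := by simp [e]
  rw [Function.comp_apply, he, zpow_add₀ hw0, zpow_natCast, inv_pow]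
  field_simp

end MulReflect

section IntCoeff

variable {k : ℕ} {a : PowerSeries ℂ}

theorem summable_norm_intCoeff (ha : MomentSummable k a) : Summable fun n => ‖intCoeff a n‖ := by
  refine (Nat.cast_injective.summable_iff fun n hn => ?_).1 (ha.summable_norm.congr fun n => ?_)
  · rw [intCoeff_of_neg a (not_le.1 fun h => hn ⟨n.toNat, Int.toNat_of_nonneg h⟩), norm_zero]
  · rw [Function.comp_apply, intCoeff_natCast]

theorem hasSum_intCoeff_mul_zpow (ha : MomentSummable k a) {w : ℂ} (hw : ‖w‖ ≤ 1) :
    HasSum (fun n => intCoeff a n * w ^ n) (evalAt w a) := by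
  refine (Nat.cast_injective.hasSum_iff fun n hn => ?_).1
    ((ha.hasSum_evalAt hw).congr_fun fun n => ?_)
  · rw [intCoeff_of_neg a (not_le.1 fun h => hn ⟨n.toNat, Int.toNat_of_nonneg h⟩), zero_mul]
  · rw [Function.comp_apply, intCoeff_natCast, zpow_natCast]

end IntCoeff

theorem integral_exp_int_mul_I (n : ℤ) :
    ∫ θ in (0:ℝ)..(2 * Real.pi), Complex.exp (Complex.I * (n : ℂ) * (θ : ℂ)) =
      if n = 0 then 2 * (Real.pi : ℂ) else 0 := by
  split_ifs with h
  · simp [h]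
  · have hc : Complex.I * (n : ℂ) ≠ 0 := mul_ne_zero Complex.I_ne_zero (by exact_mod_cast h)
    have hperiod : Complex.exp (Complex.I * n * (2 * Real.pi : ℝ)) = 1 := by
      rw [← Complex.exp_int_mul_two_pi_mul_I n]
      push_cast
      ring_nf
    rw [integral_exp_mul_complex hc, hperiod]
    simp

theorem symbolCoeff_eq_of_hasSum {c : ℤ → ℂ} (hc : Summable fun n => ‖c n‖) {t : ℂ → ℂ}
    (ht : ∀ w : ℂ, ‖w‖ = 1 → HasSum (fun n => c n * w ^ n) (t w)) (k : ℤ) :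
    symbolCoeff t k = c k := by
  have hnorm (n : ℤ) (θ : ℝ) : ‖Complex.exp (Complex.I * n * θ)‖ = 1 := by simp [Complex.norm_exp]
  have hexp (n : ℤ) (θ : ℝ) :
      Complex.exp (Complex.I * θ) ^ n * Complex.exp (-(Complex.I * k * θ)) =
        Complex.exp (Complex.I * ((n - k : ℤ) : ℂ) * θ) := by
    rw [← Complex.exp_int_mul, ← Complex.exp_add]
    push_cast
    ring_nf
  have h : HasSum (fun n => ∫ θ in (0:ℝ)..(2 * Real.pi),
        c n * Complex.exp (Complex.I * ((n - k : ℤ) : ℂ) * θ))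
      (∫ θ in (0:ℝ)..(2 * Real.pi), t (Complex.exp (Complex.I * (θ : ℂ))) *
        Complex.exp (-(Complex.I * (k : ℂ) * (θ : ℂ)))) := by
    refine intervalIntegral.hasSum_integral_of_dominated_convergence (fun n _ => ‖c n‖)
      (fun n => Continuous.aestronglyMeasurable (by fun_prop))
      (fun n => .of_forall fun θ _ => by rw [norm_mul, hnorm, mul_one])
      (.of_forall fun θ _ => hc) intervalIntegrable_const (.of_forall fun θ _ => ?_)
    refine ((ht _ (by simp [Complex.norm_exp])).mul_right _).congr_fun fun n => ?_
    rw [← hexp]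
    ring
  simp only [intervalIntegral.integral_const_mul, integral_exp_int_mul_I, sub_eq_zero, mul_ite,
    mul_zero] at h
  have hpi : (Real.pi : ℂ) ≠ 0 := by exact_mod_cast Real.pi_ne_zero
  rw [symbolCoeff, h.unique (hasSum_single k fun n hn => if_neg hn), if_pos rfl]
  field_simp

theorem symbolCoeff_eq_mulReflect {k l : ℕ} {a b : PowerSeries ℂ} (ha : MomentSummable k a)
    (hb : MomentSummable l b) {t : ℂ → ℂ}
    (ht : ∀ w : ℂ, ‖w‖ = 1 → t w = evalAt w⁻¹ b * evalAt w a) :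
    symbolCoeff t = mulReflect b (intCoeff a) :=
  funext <| symbolCoeff_eq_of_hasSum (summable_norm_mulReflect hb (summable_norm_intCoeff ha))
    fun w hw => ht w hw ▸ hasSum_mulReflect_mul_zpow hb (summable_norm_intCoeff ha) hw
      (hasSum_intCoeff_mul_zpow ha hw.le)

open Matrix in
theorem norm_det_le_prod_sum_norm {n : Type*} [Fintype n] [DecidableEq n] (A : Matrix n n ℂ) :
    ‖A.det‖ ≤ ∏ j, ∑ i, ‖A i j‖ := by
  rw [det_apply, Finset.prod_univ_sum]
  calc ‖∑ σ : Equiv.Perm n, Equiv.Perm.sign σ • ∏ j, A (σ j) j‖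
      ≤ ∑ σ : Equiv.Perm n, ∏ j, ‖A (σ j) j‖ := by
        refine (norm_sum_le _ _).trans (Finset.sum_le_sum fun σ _ => ?_)
        rcases Int.units_eq_one_or (Equiv.Perm.sign σ) with h | h <;> simp [h, norm_prod]
    _ = ∑ f ∈ Finset.univ.map ⟨fun σ : Equiv.Perm n => (σ : n → n), DFunLike.coe_injective⟩,
          ∏ j, ‖A (f j) j‖ := by simp
    _ ≤ _ := Finset.sum_le_sum_of_subset_of_nonneg (fun f _ => by simp) fun f _ _ => by positivity

section Young

variable {s : ℤ → ℂ}

theorem sum_norm_comp_le_tsum_norm {ι : Type*} [Fintype ι] (hs : Summable fun n => ‖s n‖)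
    {f : ι → ℤ} (hf : Function.Injective f) : ∑ i, ‖s (f i)‖ ≤ ∑' n, ‖s n‖ := by
  rw [← tsum_fintype (L := .unconditional ι)]
  exact tsum_comp_le_tsum_of_inj hs (fun _ => norm_nonneg _) hf

theorem sum_norm_toeplitz_mulVec_le (hs : Summable fun n => ‖s n‖) {n : ℕ} (v : Fin n → ℂ) :
    ∑ i, ‖(toeplitz s n).mulVec v i‖ ≤ (∑' k, ‖s k‖) * ∑ j, ‖v j‖ := by
  calc ∑ i, ‖(toeplitz s n).mulVec v i‖
      ≤ ∑ i : Fin n, ∑ j : Fin n, ‖s ((i : ℤ) - j)‖ * ‖v j‖ := by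
        simp only [Matrix.mulVec, dotProduct, toeplitz_apply, ← norm_mul]
        exact Finset.sum_le_sum fun i _ => norm_sum_le _ _
    _ = ∑ j : Fin n, (∑ i : Fin n, ‖s ((i : ℤ) - j)‖) * ‖v j‖ := by
        rw [Finset.sum_comm]
        simp only [Finset.sum_mul]
    _ ≤ _ := by
        rw [Finset.mul_sum]
        gcongr with j
        exact sum_norm_comp_le_tsum_norm hs fun i i' h => by
          simpa [Fin.ext_iff] using h

end Young

/-- The `(i, j)` entry of the product of the Hankel matrices `(t (i + 1 + q))` and
`(β (j + 1 + q))`. -/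
noncomputable def hankelMul (β : PowerSeries ℂ) (t : ℤ → ℂ) (i j : ℕ) : ℂ :=
  ∑' q : ℕ, coeff (j + 1 + q) β * t (i + 1 + q)

section HankelMul

variable {k : ℕ} {β : PowerSeries ℂ} {t : ℤ → ℂ}

theorem sum_norm_hankelMul_le (hβ : MomentSummable k β) (ht : Summable fun n => ‖t n‖)
    (n j : ℕ) : ∑ i : Fin n, ‖hankelMul β t i j‖ ≤ (∑' n, ‖t n‖) * coeffTail β j := by
  have hsum := hβ.summable_norm_tail j
  have hterm (i : Fin n) : Summable fun q : ℕ => ‖coeff (j + 1 + q) β‖ * ‖t (i + 1 + q)‖ :=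
    (hsum.mul_right (∑' n, ‖t n‖)).of_nonneg_of_le (fun q => by positivity) fun q => by
      gcongr
      exact ht.le_tsum _ fun _ _ => norm_nonneg _
  calc ∑ i : Fin n, ‖hankelMul β t i j‖
      ≤ ∑ i : Fin n, ∑' q : ℕ, ‖coeff (j + 1 + q) β‖ * ‖t (i + 1 + q)‖ :=
        Finset.sum_le_sum fun i _ => tsum_of_norm_bounded (hterm i).hasSum fun q => norm_mul_le _ _
    _ = ∑' q : ℕ, ‖coeff (j + 1 + q) β‖ * ∑ i : Fin n, ‖t (i + 1 + q)‖ := by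
        rw [← Summable.tsum_finsetSum fun i _ => hterm i]
        simp only [Finset.mul_sum]
    _ ≤ ∑' q : ℕ, ‖coeff (j + 1 + q) β‖ * ∑' n, ‖t n‖ := by
        have hle (q : ℕ) : ‖coeff (j + 1 + q) β‖ * ∑ i : Fin n, ‖t (i + 1 + q)‖ ≤
            ‖coeff (j + 1 + q) β‖ * ∑' n, ‖t n‖ := by
          gcongr
          exact sum_norm_comp_le_tsum_norm ht fun i i' h => by simpa [Fin.ext_iff] using h
        exact ((hsum.mul_right _).of_nonneg_of_le (fun q => by positivity) hle).tsum_le_tsum hle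
          (hsum.mul_right _)
    _ = _ := by rw [tsum_mul_right, coeffTail, mul_comm]

theorem sum_mul_intCoeff_eq_mulReflect_sub_hankelMul (hβ : MomentSummable k β) {K : ℝ}
    (ht : ∀ n, ‖t n‖ ≤ K) (i : ℕ) {j n : ℕ} (hj : j < n) :
    ∑ q ∈ Finset.range n, t (i - q) * intCoeff β (j - q) =
      mulReflect β t (i - j) - hankelMul β t i j := by
  calc ∑ q ∈ Finset.range n, t (i - q) * intCoeff β (j - q)
      = ∑ q ∈ Finset.range (j + 1), t (i - q) * intCoeff β (j - q) := by
        refine (Finset.sum_subset (Finset.range_subset_range.2 hj) fun q _ hq => ?_).symm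
        rw [intCoeff_of_neg β (by simp only [Finset.mem_range] at hq; omega), mul_zero]
    _ = ∑ q ∈ Finset.range (j + 1), coeff q β * t (i - j + q) := by
        rw [← Finset.sum_range_reflect]
        refine Finset.sum_congr rfl fun q hq => ?_
        have hq : ((j + 1 - 1 - q : ℕ) : ℤ) = j - q := by
          rw [Finset.mem_range] at hq
          omega
        rw [hq, sub_sub_cancel, intCoeff_natCast, mul_comm, sub_add]
    _ = _ := by
        rw [eq_sub_iff_add_eq, mulReflect,
          ← (summable_mulReflect_terms hβ ht (i - j)).sum_add_tsum_nat_add (j + 1), hankelMul]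
        congr 2 with q
        rw [add_comm q]
        push_cast
        ring_nf

theorem toeplitz_mul_transpose_toeplitz_intCoeff (hβ : MomentSummable k β) {K : ℝ}
    (ht : ∀ n, ‖t n‖ ≤ K) (n : ℕ) :
    toeplitz t n * (toeplitz (intCoeff β) n).transpose =
      toeplitz (mulReflect β t) n - Matrix.of fun i j : Fin n => hankelMul β t i j := by
  ext i j
  exact (Fin.sum_univ_eq_sum_range (fun q => t (i - q) * intCoeff β (j - q)) n).trans
    (sum_mul_intCoeff_eq_mulReflect_sub_hankelMul hβ ht i j.2)

end HankelMul

section Cramer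

open Matrix

variable {R n : Type*} [CommRing R] [Fintype n] [DecidableEq n]

theorem cramer_mul_mulVec (A B : Matrix n n R) (v : n → R) :
    cramer (A * B) (A.mulVec v) = A.det • cramer B v := by
  ext i
  rw [cramer_apply, ← mul_updateCol, det_mul, Pi.smul_apply, cramer_apply, smul_eq_mul]

theorem mulVec_cramer_mul (A B : Matrix n n R) (v : n → R) :
    B.mulVec (cramer (A * B) v) = B.det • cramer A v := by
  simp only [cramer_eq_adjugate_mulVec, adjugate_mul_distrib, mulVec_mulVec, ← mul_assoc,
    mul_adjugate, smul_mul, one_mul, smul_mulVec]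

theorem cramer_mul_top_of_isUpperTriangular [LinearOrder n] [OrderTop n] (A : Matrix n n R)
    {U : Matrix n n R} (hU : U.IsUpperTriangular) (hdiag : ∀ i, U i i = 1) (v : n → R) :
    cramer (A * U) v ⊤ = cramer A v ⊤ := by
  have h := congrFun (mulVec_cramer_mul A U v) ⊤
  have hdet : U.det = 1 := by
    rw [det_of_isUpperTriangular hU]
    exact Finset.prod_eq_one fun i _ => hdiag i
  rwa [hdet, one_smul, mulVec, dotProduct, Finset.sum_eq_single ⊤
    (fun j _ hj => by rw [hU hj.lt_top, zero_mul]) (by simp), hdiag, one_mul] at h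

end Cramer

section DetBound

open Matrix

variable {k l : ℕ} {a α β : PowerSeries ℂ} {t : ℤ → ℂ}

theorem toeplitz_mul_toeplitz_mul_transpose_toeplitz (hβ : MomentSummable k β) {K : ℝ}
    (ht : ∀ n, ‖t n‖ ≤ K) (hβt : mulReflect β t = intCoeff a) (hα : α * a = 1) (n : ℕ) :
    toeplitz (intCoeff α) n * toeplitz t n * (toeplitz (intCoeff β) n).transpose =
      1 - toeplitz (intCoeff α) n * of fun i j : Fin n => hankelMul β t i j := by
  rw [mul_assoc, toeplitz_mul_transpose_toeplitz_intCoeff hβ ht, hβt, mul_sub,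
    toeplitz_intCoeff_mul, hα, toeplitz_intCoeff_one]

theorem sum_norm_one_sub_toeplitz_mul_hankelMul_le (hα : MomentSummable l α)
    (hβ : MomentSummable k β) (ht : Summable fun n => ‖t n‖) {n : ℕ} (j : Fin n) :
    ∑ i, ‖(1 - toeplitz (intCoeff α) n * of fun i j : Fin n => hankelMul β t i j) i j‖ ≤
      1 + (∑' n, ‖intCoeff α n‖) * (∑' n, ‖t n‖) * coeffTail β j := by
  calc ∑ i, ‖(1 - toeplitz (intCoeff α) n * of fun i j : Fin n => hankelMul β t i j) i j‖
      ≤ ∑ i, ‖(1 : Matrix (Fin n) (Fin n) ℂ) i j‖ +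
          ∑ i, ‖(toeplitz (intCoeff α) n).mulVec (fun i => hankelMul β t i j) i‖ := by
        rw [← Finset.sum_add_distrib]
        exact Finset.sum_le_sum fun i _ => norm_sub_le _ _
    _ ≤ 1 + (∑' n, ‖intCoeff α n‖) * ((∑' n, ‖t n‖) * coeffTail β j) := by
        gcongr
        · simp [one_apply, apply_ite]
        · refine (sum_norm_toeplitz_mulVec_le (summable_norm_intCoeff hα) _).trans ?_
          gcongr
          exact sum_norm_hankelMul_le hβ ht n j
    _ = _ := by rw [mul_assoc]

theorem norm_cramer_last_le {N : ℕ} (A : Matrix (Fin (N + 1)) (Fin (N + 1)) ℂ)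
    (v : Fin (N + 1) → ℂ) :
    ‖cramer A v (Fin.last N)‖ ≤ (∏ j : Fin N, ∑ i, ‖A i j.castSucc‖) * ∑ i, ‖v i‖ := by
  refine (norm_det_le_prod_sum_norm _).trans_eq ?_
  simp [Fin.prod_univ_castSucc, updateCol_apply, (Fin.castSucc_lt_last _).ne]

-- Multiplying by unitriangular Toeplitz matrices turns all columns but the last into those of the
-- identity plus a Hankel product whose columns have summable norms.
theorem norm_cramer_toeplitz_last_le (hα : MomentSummable l α) (hβ : MomentSummable 1 β)
    (ht : Summable fun n => ‖t n‖) (hβt : mulReflect β t = intCoeff a) (hαa : α * a = 1)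
    (hα0 : constantCoeff α = 1) (hβ0 : constantCoeff β = 1) (N : ℕ) (v : Fin (N + 1) → ℂ) :
    ‖cramer (toeplitz t (N + 1)) v (Fin.last N)‖ ≤
      Real.exp ((∑' n, ‖intCoeff α n‖) * (∑' n, ‖t n‖) * ∑' j, coeffTail β j) *
        ((∑' n, ‖intCoeff α n‖) * ∑ i, ‖v i‖) := by
  set L := toeplitz (intCoeff α) (N + 1)
  set U := (toeplitz (intCoeff β) (N + 1)).transpose
  set D := (∑' n, ‖intCoeff α n‖) * (∑' n, ‖t n‖)
  have hD : 0 ≤ D :=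
    mul_nonneg (tsum_nonneg fun _ => norm_nonneg _) (tsum_nonneg fun _ => norm_nonneg _)
  have hLU : cramer (L * toeplitz t (N + 1) * U) (L.mulVec v) (Fin.last N) =
      cramer (toeplitz t (N + 1)) v (Fin.last N) := by
    rw [← Fin.top_eq_last, cramer_mul_top_of_isUpperTriangular, cramer_mul_mulVec,
      det_toeplitz_intCoeff, hα0, one_pow, one_smul]
    · exact fun i j hij => intCoeff_of_neg β (sub_neg.2 (by exact_mod_cast hij))
    · simp [U, hβ0]
  rw [← hLU, toeplitz_mul_toeplitz_mul_transpose_toeplitz hβ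
    (fun n => ht.le_tsum n fun _ _ => norm_nonneg _) hβt hαa]
  refine (norm_cramer_last_le _ _).trans ?_
  gcongr
  · calc _ ≤ ∏ j : Fin N, (1 + D * coeffTail β j) :=
          Finset.prod_le_prod (fun _ _ => by positivity) fun j _ =>
            sum_norm_one_sub_toeplitz_mul_hankelMul_le hα hβ ht j.castSucc
      _ ≤ Real.exp (∑ j : Fin N, D * coeffTail β j) :=
          Real.prod_one_add_le_exp_sum _ fun j => mul_nonneg hD (coeffTail_nonneg β j)
      _ ≤ _ := by
        rw [← Finset.mul_sum, Fin.sum_univ_eq_sum_range (coeffTail β)]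
        gcongr
        exact (summable_coeffTail hβ).sum_le_tsum _ fun j _ => coeffTail_nonneg β j
  · exact sum_norm_toeplitz_mulVec_le (summable_norm_intCoeff hα) v

end DetBound

section DetRecursion

open Matrix

theorem cramer_apply_congr {R n : Type*} [CommRing R] [Fintype n] [DecidableEq n]
    {A B : Matrix n n R} {j : n} (h : ∀ i j', j' ≠ j → A i j' = B i j') (v : n → R) :
    cramer A v j = cramer B v j := by
  rw [cramer_apply, cramer_apply]
  congr 1
  ext i j'
  simp only [updateCol_apply]
  split_ifs with hj
  · rfl
  · exact h i j' hj

theorem cramer_col_apply {R n : Type*} [CommRing R] [Fintype n] [DecidableEq n]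
    (A : Matrix n n R) (j : n) : cramer A (A.col j) j = A.det := by
  rw [cramer_apply]
  exact congrArg det (updateCol_eq_self A j)

theorem one_sub_C_mul_X_mul_mk_pow {R : Type*} [CommRing R] (x : R) :
    (1 - C x * X) * mk (fun n => x ^ n) = 1 := by
  ext n
  cases n with
  | zero => simp [sub_mul]
  | succ n => simp [sub_mul, mul_assoc, coeff_succ_X_mul, coeff_one, pow_succ']

section CommRing

variable {R : Type*} [CommRing R]

theorem toeplitz_mul_toeplitz_one_sub_C_mul_X_apply (t : ℤ → R) (x : R) {n : ℕ} (i j : Fin n) :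
    (toeplitz t n * toeplitz (intCoeff (1 - C x * X)) n : Matrix _ _ R) i j =
      t (i - j) - if (j : ℕ) + 1 < n then x * t (i - j - 1) else 0 := by
  have hS (m : ℤ) : intCoeff (1 - C x * X) m =
      (if m = 0 then 1 else 0) - if m = 1 then x else 0 := by
    simpa [intCoeff_one, sub_eq_zero] using intCoeff_one_sub_C_mul_X_mul x 1 m
  have hj (q : ℕ) : (q : ℤ) - j = 1 ↔ q = j + 1 := by omega
  rw [mul_apply]
  simp only [toeplitz_apply]
  rw [Fin.sum_univ_eq_sum_range (fun q => t (i - q) * intCoeff (1 - C x * X) (q - j)) n]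
  simp only [hS, sub_eq_zero, Nat.cast_inj, hj, mul_sub, mul_ite, mul_one, mul_zero,
    Finset.sum_sub_distrib, Finset.sum_ite_eq', Finset.mem_range, j.2, if_true, Nat.cast_add,
    Nat.cast_one, sub_sub, mul_comm x]

theorem cramer_toeplitz_sub_mul_shift_last (t : ℤ → R) (x : R) {N : ℕ} (v : Fin (N + 1) → R) :
    cramer (toeplitz (fun m => t m - x * t (m - 1)) (N + 1)) v (Fin.last N) =
      cramer (toeplitz t (N + 1) * toeplitz (intCoeff (1 - C x * X)) (N + 1)) v (Fin.last N) := by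
  refine cramer_apply_congr (fun i j hj => ?_) v
  rw [toeplitz_mul_toeplitz_one_sub_C_mul_X_apply, if_pos (Nat.succ_lt_succ (Fin.val_lt_last hj)),
    toeplitz_apply]

theorem cramer_toeplitz_one_sub_C_mul_X_last (x : R) (N : ℕ) (v : Fin (N + 1) → R) :
    cramer (toeplitz (intCoeff (1 - C x * X)) (N + 1)) v (Fin.last N) =
      ∑ j : Fin (N + 1), x ^ (N - j : ℕ) * v j := by
  have h := cramer_mul_mulVec (toeplitz (intCoeff (mk fun n => x ^ n)) (N + 1))
    (toeplitz (intCoeff (1 - C x * X)) (N + 1)) v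
  have hG : constantCoeff (mk fun n => x ^ n) = 1 := by simp
  rw [toeplitz_intCoeff_mul, mul_comm, one_sub_C_mul_X_mul_mk_pow, toeplitz_intCoeff_one,
    det_toeplitz_intCoeff, cramer_one, hG, one_pow, one_smul] at h
  rw [← h, Module.End.one_apply, mulVec, dotProduct]
  refine Finset.sum_congr rfl fun j _ => ?_
  rw [toeplitz_apply, intCoeff_sub_natCast, Fin.val_last, if_pos j.is_le, coeff_mk]

theorem sum_range_coeff_mul_pow_eq_cramer {β : PowerSeries R} (hβ : constantCoeff β = 1) (x : R)
    (N : ℕ) : ∑ q ∈ Finset.range (N + 2), coeff q β * x ^ q =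
      1 + x * cramer (toeplitz (intCoeff (1 - C x * X)) (N + 1))
        (fun j => intCoeff β ((N + 1 : ℕ) - j)) (Fin.last N) := by
  rw [cramer_toeplitz_one_sub_C_mul_X_last, Finset.sum_range_succ', ← Finset.sum_range_reflect,
    ← Fin.sum_univ_eq_sum_range (fun j => coeff (N + 1 - 1 - j + 1) β * x ^ (N + 1 - 1 - j + 1)),
    Finset.mul_sum, coeff_zero_eq_constantCoeff_apply, hβ, pow_zero, mul_one, add_comm]
  congr 1
  refine Finset.sum_congr rfl fun j _ => ?_
  rw [intCoeff_sub_natCast, if_pos j.2.le, Nat.add_sub_cancel, Nat.sub_add_comm j.is_le, pow_succ]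
  ring

end CommRing

variable {k : ℕ} {a β : PowerSeries ℂ} {t : ℤ → ℂ}

theorem toeplitz_mulVec_add_hankelMul (hβ : MomentSummable k β) {K : ℝ} (ht : ∀ n, ‖t n‖ ≤ K)
    (hβt : mulReflect β t = intCoeff a) (hβ0 : constantCoeff β = 1) {n : ℕ} (i : Fin n) :
    (toeplitz t n).mulVec (fun j => intCoeff β (n - j)) i + hankelMul β t i n = -t (i - n) := by
  have h := sum_mul_intCoeff_eq_mulReflect_sub_hankelMul hβ ht i n.lt_succ_self
  rw [Finset.sum_range_succ, sub_self, intCoeff_zero, hβ0, mul_one, hβt,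
    intCoeff_of_neg a (sub_neg.2 (by exact_mod_cast i.2))] at h
  rw [mulVec, dotProduct]
  simp only [toeplitz_apply]
  rw [Fin.sum_univ_eq_sum_range (fun q => t (i - q) * intCoeff β (n - q)) n]
  linear_combination h

theorem col_last_toeplitz_sub_mul_shift (hβ : MomentSummable k β) {K : ℝ} (ht : ∀ n, ‖t n‖ ≤ K)
    (hβt : mulReflect β t = intCoeff a) (hβ0 : constantCoeff β = 1) (x : ℂ) (N : ℕ) :
    (toeplitz (fun m => t m - x * t (m - 1)) (N + 1)).col (Fin.last N) =
      (toeplitz t (N + 1) * toeplitz (intCoeff (1 - C x * X)) (N + 1)).col (Fin.last N) +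
        x • ((toeplitz t (N + 1)).mulVec (fun j => intCoeff β ((N + 1 : ℕ) - j)) +
          fun i : Fin (N + 1) => hankelMul β t i (N + 1)) := by
  ext i
  simp only [Pi.add_apply, Pi.smul_apply, smul_eq_mul, col_apply]
  rw [toeplitz_mulVec_add_hankelMul hβ ht hβt hβ0, toeplitz_mul_toeplitz_one_sub_C_mul_X_apply,
    if_neg (by simp), toeplitz_apply, Fin.val_last, Nat.cast_add_one, ← sub_sub]
  ring

theorem det_toeplitz_sub_mul_shift (hβ : MomentSummable k β) {K : ℝ} (ht : ∀ n, ‖t n‖ ≤ K)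
    (hβt : mulReflect β t = intCoeff a) (hβ0 : constantCoeff β = 1) (x : ℂ) (N : ℕ) :
    (toeplitz (fun m => t m - x * t (m - 1)) (N + 1)).det =
      (toeplitz t (N + 1)).det * ∑ q ∈ Finset.range (N + 2), coeff q β * x ^ q +
        x * cramer (toeplitz (fun m => t m - x * t (m - 1)) (N + 1))
          (fun i => hankelMul β t i (N + 1)) (Fin.last N) := by
  have hdet : (toeplitz (intCoeff (1 - C x * X)) (N + 1)).det = 1 := by
    simp [det_toeplitz_intCoeff]
  rw [sum_range_coeff_mul_pow_eq_cramer hβ0, ← cramer_col_apply _ (Fin.last N),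
    col_last_toeplitz_sub_mul_shift hβ ht hβt hβ0, cramer_toeplitz_sub_mul_shift_last,
    cramer_toeplitz_sub_mul_shift_last, map_add, map_smul, map_add, cramer_mul_mulVec]
  simp only [Pi.add_apply, Pi.smul_apply, smul_eq_mul]
  rw [cramer_col_apply, det_mul, hdet]
  ring

end DetRecursion

section Limit

open Matrix

theorem tendsto_mul_iff_of_tendsto_sub_mul_zero {ι 𝕜 : Type*} [NormedField 𝕜] {l : Filter ι}
    {u v c : ι → 𝕜} {γ L : 𝕜} (huv : Tendsto (fun i => u i - v i * c i) l (𝓝 0))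
    (hc : Tendsto c l (𝓝 γ)) (hγ : γ ≠ 0) :
    Tendsto u l (𝓝 (L * γ)) ↔ Tendsto v l (𝓝 L) := by
  refine ⟨fun hu => ?_, fun hv => by simpa using huv.add (hv.mul hc)⟩
  have hvc : Tendsto (fun i => v i * c i) l (𝓝 (L * γ)) := by simpa using hu.sub huv
  rw [← mul_div_cancel_right₀ L hγ]
  refine (hvc.div hc hγ).congr' ?_
  filter_upwards [hc.eventually_ne hγ] with i hi
  exact mul_div_cancel_right₀ _ hi

variable {k l : ℕ} {a α b β : PowerSeries ℂ} {s t : ℤ → ℂ} {x : ℂ}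

theorem norm_intCoeff_le (ha : MomentSummable k a) (n : ℤ) :
    ‖intCoeff a n‖ ≤ ∑' m, ‖intCoeff a m‖ :=
  (summable_norm_intCoeff ha).le_tsum n fun _ _ => norm_nonneg _

theorem mulReflect_mulReflect_of_mul_eq_one (hβ : MomentSummable k β) (hb : MomentSummable l b)
    (hβb : β * b = 1) {K : ℝ} (hs : ∀ n, ‖s n‖ ≤ K) : mulReflect β (mulReflect b s) = s := by
  rw [mulReflect_mulReflect hβ hb hs, hβb, mulReflect_one]

theorem mulReflect_intCoeff_one_sub_C_mul_X_mul (hb : MomentSummable l b) (ha : MomentSummable k a)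
    (x : ℂ) : mulReflect b (intCoeff ((1 - C x * X) * a)) =
      fun n => mulReflect b (intCoeff a) n - x * mulReflect b (intCoeff a) (n - 1) := by
  funext n
  rw [← mulReflect_sub_mul_shift hb (norm_intCoeff_le ha)]
  simp only [← intCoeff_one_sub_C_mul_X_mul]

theorem tendsto_cramer_toeplitz_hankelMul (hα : MomentSummable l α) (hβ : MomentSummable 1 β)
    (ht : Summable fun n => ‖t n‖) (hβt : mulReflect β t = intCoeff a) (hαa : α * a = 1)
    (hα0 : constantCoeff α = 1) (hβ0 : constantCoeff β = 1) (hs : Summable fun n => ‖s n‖) :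
    Tendsto (fun N => cramer (toeplitz t (N + 1)) (fun i => hankelMul β s i (N + 1)) (Fin.last N))
      atTop (𝓝 0) := by
  set D := Real.exp ((∑' n, ‖intCoeff α n‖) * (∑' n, ‖t n‖) * ∑' j, coeffTail β j)
  have hlim : Tendsto (fun N => D * ((∑' n, ‖intCoeff α n‖) *
      ((∑' n, ‖s n‖) * coeffTail β (N + 1)))) atTop (𝓝 0) := by
    have h := (tendsto_add_atTop_iff_nat 1).2 (summable_coeffTail hβ).tendsto_atTop_zero
    simpa using ((h.const_mul _).const_mul _).const_mul D
  refine squeeze_zero_norm (fun N => ?_) hlim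
  refine (norm_cramer_toeplitz_last_le hα hβ ht hβt hαa hα0 hβ0 N _).trans ?_
  gcongr
  exact sum_norm_hankelMul_le hβ hs (N + 1) (N + 1)

theorem tendsto_det_toeplitz_sub_det_mul_sum (hα : MomentSummable l α)
    (ha : MomentSummable l a) (hb : MomentSummable k b) (hβ : MomentSummable 1 β)
    (hαa : α * a = 1) (hβb : β * b = 1) (hα0 : constantCoeff α = 1) (hβ0 : constantCoeff β = 1)
    (hx : ‖x‖ < 1) :
    Tendsto (fun N => (toeplitz (mulReflect b (intCoeff ((1 - C x * X) * a))) (N + 1)).det -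
      (toeplitz (mulReflect b (intCoeff a)) (N + 1)).det *
        ∑ q ∈ Finset.range (N + 2), coeff q β * x ^ q) atTop (𝓝 0) := by
  have ha' : MomentSummable l ((1 - C x * X) * a) := (MomentSummable.one_sub_C_mul_X x).mul ha
  have hαa' : α * mk (fun n => x ^ n) * ((1 - C x * X) * a) = 1 := by
    rw [mul_mul_mul_comm, mul_comm (PowerSeries.mk _), ← mul_mul_mul_comm, hαa, one_mul,
      one_sub_C_mul_X_mul_mk_pow]
  have hα0' : constantCoeff (α * mk fun n => x ^ n) = 1 := by simp [hα0]
  have hsum := summable_norm_mulReflect hb (summable_norm_intCoeff ha)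
  have herr := tendsto_cramer_toeplitz_hankelMul (hα.mul (.mk_pow hx)) hβ
    (summable_norm_mulReflect hb (summable_norm_intCoeff ha'))
    (mulReflect_mulReflect_of_mul_eq_one hβ hb hβb (norm_intCoeff_le ha')) hαa' hα0' hβ0 hsum
  rw [← mul_zero x]
  refine (herr.const_mul x).congr fun N => ?_
  rw [mulReflect_intCoeff_one_sub_C_mul_X_mul hb ha, det_toeplitz_sub_mul_shift hβ
    (fun n => hsum.le_tsum n fun _ _ => norm_nonneg _)
    (mulReflect_mulReflect_of_mul_eq_one hβ hb hβb (norm_intCoeff_le ha)) hβ0]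
  ring

theorem tendsto_det_toeplitz_one_sub_C_mul_X_mul_iff (hα : MomentSummable l α)
    (ha : MomentSummable l a) (hb : MomentSummable k b) (hβ : MomentSummable 1 β)
    (hαa : α * a = 1) (hβb : β * b = 1) (hα0 : constantCoeff α = 1) (hβ0 : constantCoeff β = 1)
    (hx : ‖x‖ < 1) {L : ℂ} :
    Tendsto (fun N => (toeplitz (mulReflect b (intCoeff ((1 - C x * X) * a))) N).det) atTop
        (𝓝 (L * evalAt x β)) ↔
      Tendsto (fun N => (toeplitz (mulReflect b (intCoeff a)) N).det) atTop (𝓝 L) := by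
  have hdiff := tendsto_det_toeplitz_sub_det_mul_sum hα ha hb hβ hαa hβb hα0 hβ0 hx
  have hsum := (tendsto_add_atTop_iff_nat 2).2 (hβ.hasSum_evalAt hx.le).tendsto_sum_nat
  rw [← tendsto_add_atTop_iff_nat 1, tendsto_mul_iff_of_tendsto_sub_mul_zero hdiff hsum
    (evalAt_ne_zero_of_mul_eq_one hβ hb hβb hx.le),
    ← tendsto_add_atTop_iff_nat (f := fun N => (toeplitz (mulReflect b (intCoeff a)) N).det) 1]

end Limit

theorem mulReflect_intCoeff_one (b : PowerSeries ℂ) (n : ℤ) :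
    mulReflect b (intCoeff 1) n = intCoeff b (-n) := by
  simp only [mulReflect, intCoeff_one, mul_ite, mul_one, mul_zero]
  rcases le_or_gt n 0 with hn | hn
  · obtain ⟨m, rfl⟩ : ∃ m : ℕ, n = -m := ⟨(-n).toNat, by omega⟩
    rw [tsum_eq_single m fun q hq => if_neg (by omega), if_pos (by omega), neg_neg,
      intCoeff_natCast]
  · rw [intCoeff_of_neg b (neg_neg_of_pos hn)]
    exact (tsum_congr fun m => if_neg (by omega)).trans tsum_zero

theorem det_toeplitz_mulReflect_intCoeff_one (b : PowerSeries ℂ) (n : ℕ) :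
    (toeplitz (mulReflect b (intCoeff 1)) n).det = constantCoeff b ^ n := by
  rw [← det_toeplitz_intCoeff, ← Matrix.det_transpose]
  congr 1
  ext i j
  simp [mulReflect_intCoeff_one]

/-- The power series of the rational function `∏ i ∈ s, (1 - x i * w) / ∏ k ∈ u, (1 - y k * w)`
of `w`. -/
noncomputable def ratioSeries {R ι κ : Type*} [CommRing R] (s : Finset ι) (u : Finset κ)
    (x : ι → R) (y : κ → R) : PowerSeries R :=
  (∏ i ∈ s, (1 - C (x i) * X)) * ∏ k ∈ u, PowerSeries.mk fun n => y k ^ n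

section RatioSeries

variable {R ι κ : Type*} [CommRing R]

theorem prod_one_sub_C_mul_X_mul_prod_mk_pow (s : Finset ι) (x : ι → R) :
    (∏ i ∈ s, (1 - C (x i) * X)) * ∏ i ∈ s, PowerSeries.mk (fun n => x i ^ n) = 1 := by
  rw [← Finset.prod_mul_distrib]
  exact Finset.prod_eq_one fun i _ => one_sub_C_mul_X_mul_mk_pow (x i)

theorem ratioSeries_mul_ratioSeries (s : Finset ι) (u : Finset κ) (x : ι → R) (y : κ → R) :
    ratioSeries s u x y * ratioSeries u s y x = 1 := by
  rw [ratioSeries, ratioSeries, mul_mul_mul_comm, mul_comm (∏ k ∈ u, PowerSeries.mk _),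
    mul_mul_mul_comm, prod_one_sub_C_mul_X_mul_prod_mk_pow, prod_one_sub_C_mul_X_mul_prod_mk_pow,
    one_mul]

theorem constantCoeff_ratioSeries (s : Finset ι) (u : Finset κ) (x : ι → R) (y : κ → R) :
    constantCoeff (ratioSeries s u x y) = 1 := by
  simp [ratioSeries, map_prod]

theorem ratioSeries_insert_left [DecidableEq ι] {s : Finset ι} {i : ι} (hi : i ∉ s) (u : Finset κ)
    (x : ι → R) (y : κ → R) :
    ratioSeries (insert i s) u x y = (1 - C (x i) * X) * ratioSeries s u x y := by
  rw [ratioSeries, Finset.prod_insert hi, mul_assoc, ← ratioSeries]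

theorem one_sub_C_mul_X_mul_ratioSeries_insert_right [DecidableEq κ] (s : Finset ι) {u : Finset κ}
    {k : κ} (hk : k ∉ u) (x : ι → R) (y : κ → R) :
    (1 - C (y k) * X) * ratioSeries s (insert k u) x y = ratioSeries s u x y := by
  rw [ratioSeries, Finset.prod_insert hk, mul_left_comm, ← mul_assoc (1 - _),
    one_sub_C_mul_X_mul_mk_pow, one_mul, ← ratioSeries]

end RatioSeries

section RatioSeriesComplex

variable {ι κ : Type*} {s : Finset ι} {u : Finset κ} {x : ι → ℂ} {y : κ → ℂ}

theorem MomentSummable.ratioSeries {k : ℕ} (hy : ∀ i ∈ u, ‖y i‖ < 1) :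
    MomentSummable k (ratioSeries s u x y) :=
  (prod fun i _ => .one_sub_C_mul_X (x i)).mul (.prod fun i hi => .mk_pow (hy i hi))

theorem evalAt_ratioSeries (hy : ∀ k ∈ u, ‖y k‖ < 1) {w : ℂ} (hw : ‖w‖ ≤ 1) :
    evalAt w (ratioSeries s u x y) = (∏ i ∈ s, (1 - x i * w)) / ∏ k ∈ u, (1 - y k * w) := by
  have hs : ∀ i ∈ s, MomentSummable 0 (1 - C (x i) * X) := fun i _ => .one_sub_C_mul_X (x i)
  have hu : ∀ k ∈ u, MomentSummable 0 (PowerSeries.mk fun n => y k ^ n) :=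
    fun k hk => .mk_pow (hy k hk)
  rw [ratioSeries, evalAt_mul (.prod hs) (.prod hu) hw, evalAt_prod hs hw, evalAt_prod hu hw,
    div_eq_mul_inv, ← Finset.prod_inv_distrib]
  simp only [evalAt_one_sub_C_mul_X]
  congr 1
  exact Finset.prod_congr rfl fun k hk => evalAt_mk_pow (hy k hk) hw

theorem tendsto_det_toeplitz_ratioSeries {k : ℕ} {b β : PowerSeries ℂ} (hb : MomentSummable k b)
    (hβ : MomentSummable 1 β) (hβb : β * b = 1) (hβ0 : constantCoeff β = 1)
    (hx : ∀ i ∈ s, ‖x i‖ < 1) (hy : ∀ k ∈ u, ‖y k‖ < 1) :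
    Tendsto (fun N => (toeplitz (mulReflect b (intCoeff (ratioSeries s u x y))) N).det) atTop
      (𝓝 ((∏ i ∈ s, evalAt (x i) β) / ∏ k ∈ u, evalAt (y k) β)) := by
  classical
  induction s using Finset.induction_on with
  | empty =>
    induction u using Finset.induction_on with
    | empty =>
      have hb0 : constantCoeff b = 1 := by simpa [hβ0] using congrArg constantCoeff hβb
      simp [ratioSeries, det_toeplitz_mulReflect_intCoeff_one, hb0]
    | insert k u hk ih =>
      have hyu := (Finset.forall_mem_insert ..).1 hy
      have hne := evalAt_ne_zero_of_mul_eq_one hβ hb hβb hyu.1.le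
      rw [← tendsto_det_toeplitz_one_sub_C_mul_X_mul_iff (l := 0) (.ratioSeries hx)
        (.ratioSeries hy) hb hβ (ratioSeries_mul_ratioSeries ..) hβb
        (constantCoeff_ratioSeries ..) hβ0 hyu.1,
        one_sub_C_mul_X_mul_ratioSeries_insert_right _ hk, Finset.prod_insert hk,
        mul_comm (evalAt _ _), ← div_div, div_mul_cancel₀ _ hne]
      exact ih hyu.2
  | insert i s hi ih =>
    rw [Finset.forall_mem_insert] at hx
    rw [ratioSeries_insert_left hi, Finset.prod_insert hi, mul_comm (evalAt _ _),
      mul_div_right_comm, tendsto_det_toeplitz_one_sub_C_mul_X_mul_iff (l := 0)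
        (.ratioSeries hx.2) (.ratioSeries hy) hb hβ (ratioSeries_mul_ratioSeries ..) hβb
        (constantCoeff_ratioSeries ..) hβ0 hx.1]
    exact ih hx.2

theorem tendsto_det_toeplitz_ratioSeries_ratioSeries (hx : ∀ i ∈ s, ‖x i‖ < 1)
    (hy : ∀ k ∈ u, ‖y k‖ < 1) :
    Tendsto (fun N => (toeplitz (mulReflect (ratioSeries s u x y)
        (intCoeff (ratioSeries u s y x))) N).det) atTop
      (𝓝 (((∏ i ∈ s, ∏ j ∈ s, (1 - x i * x j)) * ∏ k ∈ u, ∏ l ∈ u, (1 - y k * y l)) /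
        ∏ i ∈ s, ∏ k ∈ u, (1 - x i * y k) ^ 2)) := by
  convert tendsto_det_toeplitz_ratioSeries (k := 0) (.ratioSeries hy) (.ratioSeries hx)
    (ratioSeries_mul_ratioSeries u s y x) (constantCoeff_ratioSeries u s y x) hy hx using 2
  have hyu : ∏ k ∈ u, evalAt (y k) (ratioSeries u s y x) =
      (∏ k ∈ u, ∏ l ∈ u, (1 - y k * y l)) / ∏ i ∈ s, ∏ k ∈ u, (1 - x i * y k) := by
    rw [Finset.prod_comm (s := s), ← Finset.prod_div_distrib]
    refine Finset.prod_congr rfl fun k hk => ?_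
    rw [evalAt_ratioSeries hx (hy k hk).le]
    simp only [mul_comm (y k)]
  have hxs : ∏ i ∈ s, evalAt (x i) (ratioSeries u s y x) =
      (∏ i ∈ s, ∏ k ∈ u, (1 - x i * y k)) / ∏ i ∈ s, ∏ j ∈ s, (1 - x i * x j) := by
    rw [← Finset.prod_div_distrib]
    refine Finset.prod_congr rfl fun i hi => ?_
    rw [evalAt_ratioSeries hx (hx i hi).le]
    simp only [mul_comm (x i)]
  rw [hyu, hxs, div_div_div_eq, mul_comm (∏ k ∈ u, _), ← sq]
  simp only [Finset.prod_pow]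

end RatioSeriesComplex

section BDISymbol

variable {ι : Type*} [Fintype ι]

theorem prod_sub_eq_pow_mul_prod {w : ℂ} (hw : w ≠ 0) (x : ι → ℂ) :
    ∏ i, (w - x i) = w ^ Fintype.card ι * ∏ i, (1 - x i * w⁻¹) := by
  rw [← Finset.card_univ, ← Finset.prod_const, ← Finset.prod_mul_distrib]
  exact Finset.prod_congr rfl fun i _ => by field_simp

theorem prod_sub_eq_prod_neg_mul_prod {x : ι → ℂ} (hx : ∀ i, x i ≠ 0) (w : ℂ) :
    ∏ i, (w - x i) = (∏ i, -x i) * ∏ i, (1 - (x i)⁻¹ * w) := by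
  rw [← Finset.prod_mul_distrib]
  refine Finset.prod_congr rfl fun i _ => ?_
  have := hx i
  field_simp
  ring

theorem bdiSymbol_two_mul_sub_eq (nP : ℤ) {nz nZ : ℕ} (z : Fin nz → ℂ) {Z : Fin nZ → ℂ}
    (hZ : ∀ k, Z k ≠ 0) {w : ℂ} (hw : w ≠ 0) :
    bdiSymbol nP nz nZ z Z (2 * nz - nP) w =
      (∏ j, (1 - z j * w⁻¹)) / (∏ k, (1 - (Z k)⁻¹ * w⁻¹)) *
        ((∏ k, (1 - (Z k)⁻¹ * w)) / ∏ j, (1 - z j * w)) := by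
  have hpow : w ^ ((nz : ℤ) + nZ - nP - (2 * nz - nP)) = w ^ nZ / w ^ nz := by
    rw [show (nz : ℤ) + nZ - nP - (2 * nz - nP) = nZ - nz by ring, zpow_sub₀ hw, zpow_natCast,
      zpow_natCast]
  have hneg : ∏ k, -Z k ≠ 0 := Finset.prod_ne_zero_iff.2 fun k _ => neg_ne_zero.2 (hZ k)
  rw [bdiSymbol, hpow, prod_sub_eq_pow_mul_prod hw z,
    prod_sub_eq_pow_mul_prod hw fun k => (Z k)⁻¹, prod_sub_eq_prod_neg_mul_prod hZ]
  simp only [Fintype.card_fin, mul_comm w]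
  generalize ∏ k, -Z k = P at *
  field_simp

theorem tendsto_toeplitzDet_bdiSymbol (nP : ℤ) {nz nZ : ℕ} {z : Fin nz → ℂ} {Z : Fin nZ → ℂ}
    (hz : ∀ j, ‖z j‖ < 1) (hZ : ∀ k, 1 < ‖Z k‖) :
    Tendsto (toeplitzDet (bdiSymbol nP nz nZ z Z (2 * nz - nP))) atTop
      (𝓝 (((∏ i, ∏ j, (1 - z i * z j)) * ∏ k, ∏ l, (1 - (Z k * Z l)⁻¹)) /
        ∏ j, ∏ k, (1 - z j / Z k) ^ 2)) := by
  have hZ' : ∀ k, ‖(Z k)⁻¹‖ < 1 := fun k => by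
    rw [norm_inv]
    exact inv_lt_one_of_one_lt₀ (hZ k)
  have hcoeff : symbolCoeff (bdiSymbol nP nz nZ z Z (2 * nz - nP)) =
      mulReflect (ratioSeries Finset.univ Finset.univ z fun k => (Z k)⁻¹)
        (intCoeff (ratioSeries Finset.univ Finset.univ (fun k => (Z k)⁻¹) z)) := by
    refine symbolCoeff_eq_mulReflect (k := 0) (l := 0) (.ratioSeries fun j _ => hz j)
      (.ratioSeries fun k _ => hZ' k) fun w hw => ?_
    rw [evalAt_ratioSeries (fun k _ => hZ' k) (by simp [hw]),
      evalAt_ratioSeries (fun j _ => hz j) hw.le,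
      bdiSymbol_two_mul_sub_eq nP z (fun k => norm_pos_iff.1 (zero_lt_one.trans (hZ k)))
        (norm_ne_zero_iff.1 (hw ▸ one_ne_zero))]
  change Tendsto (fun N => (toeplitz (symbolCoeff _) N).det) atTop _
  simp only [hcoeff, div_eq_mul_inv (z _), mul_inv (Z _)]
  exact tendsto_det_toeplitz_ratioSeries_ratioSeries (fun j _ => hz j) fun k _ => hZ' k

end BDISymbol

section ConjugationInvariant

open ComplexConjugate ComplexOrder

variable {ι κ : Type*} [Fintype ι] [Fintype κ]

theorem im_prod_prod_eq_zero {f : ι → κ → ℂ} (σ : Equiv.Perm ι) (τ : Equiv.Perm κ)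
    (h : ∀ i k, f (σ i) (τ k) = conj (f i k)) : (∏ i, ∏ k, f i k).im = 0 := by
  rw [← Complex.conj_eq_iff_im]
  simp only [map_prod, ← h]
  rw [Equiv.prod_comp σ fun i => ∏ k, f i (τ k)]
  exact Finset.prod_congr rfl fun i _ => Equiv.prod_comp τ (f i)

theorem prod_prod_one_sub_mul_ne_zero {x : ι → ℂ} {y : κ → ℂ} (hx : ∀ i, ‖x i‖ < 1)
    (hy : ∀ k, ‖y k‖ ≤ 1) : ∏ i, ∏ k, (1 - x i * y k) ≠ 0 := by
  refine Finset.prod_ne_zero_iff.2 fun i _ => Finset.prod_ne_zero_iff.2 fun k _ h => ?_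
  have hlt : ‖x i * y k‖ < 1 :=
    norm_mul (x i) (y k) ▸ mul_lt_one_of_nonneg_of_lt_one_left (norm_nonneg _) (hx i) (hy k)
  rw [← sub_eq_zero.1 h, norm_one] at hlt
  exact hlt.false

-- Scaling by `r ∈ [0, 1]` joins the product to `1` through nonzero real numbers.
theorem prod_prod_one_sub_mul_nonneg {x : ι → ℂ} (hx : ∀ i, ‖x i‖ < 1) (σ : Equiv.Perm ι)
    (hσ : ∀ i, x (σ i) = conj (x i)) : 0 ≤ ∏ i, ∏ j, (1 - x i * x j) := by
  set P : ℝ → ℂ := fun r => ∏ i, ∏ j, (1 - r * x i * x j) with hP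
  have hreal (r : ℝ) : (P r).im = 0 := im_prod_prod_eq_zero σ σ fun i j => by simp [hσ]
  have hP1 : P 1 = ∏ i, ∏ j, (1 - x i * x j) := by simp [hP]
  rw [← hP1]
  refine Complex.nonneg_iff.2 ⟨?_, (hreal 1).symm⟩
  by_contra! hneg
  have hcont : Continuous fun r => (P r).re := by fun_prop
  obtain ⟨r, hr, hr0⟩ := intermediate_value_Icc' zero_le_one hcont.continuousOn
    (show (0 : ℝ) ∈ Set.Icc (P 1).re (P 0).re from ⟨hneg.le, by simp [hP]⟩)
  refine prod_prod_one_sub_mul_ne_zero (x := fun i => r * x i) (fun i => ?_) (fun j => (hx j).le)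
    (Complex.ext hr0 (hreal r))
  rw [norm_mul, Complex.norm_of_nonneg hr.1]
  exact (mul_le_of_le_one_left (norm_nonneg _) hr.2).trans_lt (hx i)

theorem prod_prod_div_prod_prod_sq_nonneg {x : ι → ℂ} {y : κ → ℂ} (hx : ∀ i, ‖x i‖ < 1)
    (hy : ∀ k, ‖y k‖ < 1) (σ : Equiv.Perm ι) (τ : Equiv.Perm κ)
    (hσ : ∀ i, x (σ i) = conj (x i)) (hτ : ∀ k, y (τ k) = conj (y k)) :
    0 ≤ ((∏ i, ∏ j, (1 - x i * x j)) * ∏ k, ∏ l, (1 - y k * y l)) /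
      ∏ i, ∏ k, (1 - x i * y k) ^ 2 := by
  refine div_nonneg (mul_nonneg (prod_prod_one_sub_mul_nonneg hx σ hσ)
    (prod_prod_one_sub_mul_nonneg hy τ hτ)) ?_
  have him : (∏ i, ∏ k, (1 - x i * y k)).im = 0 :=
    im_prod_prod_eq_zero σ τ fun i k => by simp [hσ, hτ]
  obtain ⟨q, hq⟩ : ∃ q : ℝ, (q : ℂ) = ∏ i, ∏ k, (1 - x i * y k) := ⟨_, Complex.ext rfl him.symm⟩
  simp only [Finset.prod_pow, ← hq]
  exact_mod_cast sq_nonneg q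

end ConjugationInvariant

/-- Remark 3: closed formula for the string order parameter in class BDI
(no genericity assumption).  The limit of `|D_N[t_ω]|` exists and equals the
stated product of zeros, which is in particular a nonnegative real number. -/
theorem bdi_string_order_parameter
    (nP : ℤ) (nz nZ : ℕ)
    (z : Fin nz → ℂ) (Z : Fin nZ → ℂ)
    (hz : ∀ j, 0 < ‖z j‖ ∧ ‖z j‖ < 1) (hZ : ∀ k, 1 < ‖Z k‖)
    (hconjz : ∃ σ : Equiv.Perm (Fin nz), ∀ j, z (σ j) = (starRingEnd ℂ) (z j))
    (hconjZ : ∃ σ : Equiv.Perm (Fin nZ), ∀ k, Z (σ k) = (starRingEnd ℂ) (Z k)) :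
    Tendsto
      (fun N : ℕ => (‖toeplitzDet (bdiSymbol nP nz nZ z Z (2 * (nz : ℤ) - nP)) N‖ : ℂ))
      atTop
      (nhds (((∏ j1 : Fin nz, ∏ j2 : Fin nz, (1 - z j1 * z j2)) *
              (∏ k1 : Fin nZ, ∏ k2 : Fin nZ, (1 - (Z k1 * Z k2)⁻¹))) /
             (∏ j : Fin nz, ∏ k : Fin nZ, (1 - z j / Z k) ^ 2))) ∧
    (((∏ j1 : Fin nz, ∏ j2 : Fin nz, (1 - z j1 * z j2)) *
      (∏ k1 : Fin nZ, ∏ k2 : Fin nZ, (1 - (Z k1 * Z k2)⁻¹))) /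
     (∏ j : Fin nz, ∏ k : Fin nZ, (1 - z j / Z k) ^ 2)).im = 0 ∧
    0 ≤ (((∏ j1 : Fin nz, ∏ j2 : Fin nz, (1 - z j1 * z j2)) *
      (∏ k1 : Fin nZ, ∏ k2 : Fin nZ, (1 - (Z k1 * Z k2)⁻¹))) /
     (∏ j : Fin nz, ∏ k : Fin nZ, (1 - z j / Z k) ^ 2)).re := by
  obtain ⟨σ, hσ⟩ := hconjz
  obtain ⟨τ, hτ⟩ := hconjZ
  have hnonneg := prod_prod_div_prod_prod_sq_nonneg (y := fun k => (Z k)⁻¹)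
    (fun j => (hz j).2) (fun k => norm_inv (Z k) ▸ inv_lt_one_of_one_lt₀ (hZ k)) σ τ hσ
    fun k => by rw [hτ, map_inv₀]
  simp only [← mul_inv, ← div_eq_mul_inv (z _)] at hnonneg
  obtain ⟨hre, him⟩ := Complex.nonneg_iff.1 hnonneg
  have hlim := tendsto_toeplitzDet_bdiSymbol nP (fun j => (hz j).2) hZ
  have habs := (Complex.continuous_ofReal.tendsto _).comp hlim.norm
  rw [Complex.norm_of_nonneg' hnonneg] at habs
  exact ⟨habs, him.symm, hre⟩
end

section
/- Finitely many non-trivial correlation-matrix eigenvalues (Corollary 2: characteristic polynomial of the correlation matrix, BDI). Assume BDI data (any n_P ∈ ℤ, n_z, n_Z ≥ 0; no genericity assumption), and let t_0 be the BDI string symbol at α = 0. For λ ∈ ℂ let Φ_λ be the 2×2-matrix-valued symbol on the unit circle defined by Φ_λ(e^{iθ}) = [[iλ, t_0(e^{iθ})], [−t_0(e^{−iθ}), iλ]]. Then there exists a natural number d (depending only on the BDI data, not on N) such that for every integer N ≥ d there exist real numbers x_1(N),…,x_d(N) ∈ [0,1] with D_N[Φ_λ] = (1 − λ²)^{N−d}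 · ∏_{j=1}^{d} (x_j(N) − λ²) for all λ ∈ ℂ. -/
open scoped BigOperators
open Filter

/-- The `k`-th (matrix) Fourier coefficient of a `2 × 2`-matrix-valued symbol. -/
noncomputable def blockSymbolCoeff (Φ : ℂ → Matrix (Fin 2) (Fin 2) ℂ) (k : ℤ) :
    Matrix (Fin 2) (Fin 2) ℂ :=
  Matrix.of fun i j => symbolCoeff (fun w => Φ w i j) k

/-- The `2N × 2N` block Toeplitz determinant `D_N[Φ]` generated by the
`2 × 2`-matrix-valued symbol `Φ`. -/
noncomputable def blockToeplitzDet (Φ : ℂ → Matrix (Fin 2) (Fin 2) ℂ) (N : ℕ) : ℂ :=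
  Matrix.det (Matrix.of fun p q : Fin N × Fin 2 =>
    blockSymbolCoeff Φ ((p.1 : ℤ) - (q.1 : ℤ)) p.2 q.2)

/-!
On the unit circle the string symbol `t` is the phase of the real Laurent polynomial
`w ^ k * F(w) ^ 2`, so `‖t w‖ = 1` and `t w⁻¹ = star (t w)`. The block Toeplitz determinant is then
`det (T * Tᴴ - λ²)`, where `T` is the scalar Toeplitz matrix of `t`. By Parseval and Bessel `T` is a
contraction, so the eigenvalues of `T * Tᴴ` lie in `[0, 1]`. All but `d` of them equal `1`: there
are polynomials `P` and `Q` of degree at most `d` with `t * Q = P`, hence `star t * P = Q`, on the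
circle, so for every polynomial `r` of degree less than `N - d` the matrix `Tᴴ` maps the coefficient
vector of `P * r` to that of `Q * r`, and `T` maps it back.
-/

open Matrix Polynomial Metric AddCircle MeasureTheory
open scoped Real Matrix.Norms.L2Operator

attribute [local instance] Polynomial.instTwoPiPos

section Fourier

lemma symbolCoeff_congr {f g : ℂ → ℂ} (h : Set.EqOn f g (sphere 0 1)) :
    symbolCoeff f = symbolCoeff g := by
  have hcircle (θ : ℝ) : Complex.exp (Complex.I * θ) ∈ sphere (0 : ℂ) 1 := by
    simp [Complex.norm_exp_I_mul_ofReal]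
  ext k
  simp only [symbolCoeff, h (hcircle _)]

lemma symbolCoeff_neg (f : ℂ → ℂ) (k : ℤ) :
    symbolCoeff (fun w => -f w) k = -symbolCoeff f k := by
  simp [symbolCoeff]

lemma symbolCoeff_star (f : ℂ → ℂ) (k : ℤ) :
    symbolCoeff (fun w => star (f w)) k = star (symbolCoeff f (-k)) := by
  simp [symbolCoeff, ← intervalIntegral.intervalIntegral_conj, ← Complex.exp_conj]

lemma symbolCoeff_mul_const_mul_pow (f : ℂ → ℂ) (c : ℂ) (n : ℕ) (k : ℤ) :
    symbolCoeff (fun w => f w * (c * w ^ n)) k = symbolCoeff f (k - n) * c := by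
  rw [symbolCoeff, symbolCoeff, mul_assoc, ← intervalIntegral.integral_mul_const]
  congr 2
  ext θ
  have hexp : Complex.exp (-(Complex.I * (k - n : ℤ) * θ)) =
      Complex.exp (Complex.I * θ) ^ n * Complex.exp (-(Complex.I * k * θ)) := by
    rw [← Complex.exp_nat_mul, ← Complex.exp_add]
    push_cast
    ring_nf
  rw [hexp]
  ring

lemma symbolCoeff_eq_fourierCoeff (f : ℂ → ℂ) (k : ℤ) :
    symbolCoeff f k = fourierCoeff (fun x : AddCircle (2 * π) => f x.toCircle) k := by
  rw [fourierCoeff_eq_intervalIntegral _ _ 0, symbolCoeff, Complex.real_smul, zero_add]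
  congr! 1
  · norm_num
  refine intervalIntegral.integral_congr fun θ _ => ?_
  have hexp : 2 * π * Complex.I * (-k : ℤ) * θ / (2 * π : ℝ) = -(Complex.I * k * θ) := by
    push_cast
    field_simp
  simp only [fourier_coe_apply, toCircle_apply_mk, Circle.coe_exp, smul_eq_mul, hexp]
  rw [mul_comm]
  congr! 3
  simp [mul_comm]

lemma symbolCoeff_eval (p : ℂ[X]) (k : ℤ) :
    symbolCoeff (fun w => p.eval w) k = if 0 ≤ k then p.coeff k.natAbs else 0 := by
  rw [symbolCoeff_eq_fourierCoeff, ← fourierCoeff_toAddCircle]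
  congr with x
  simp [toAddCircle]

lemma symbolCoeff_const (c : ℂ) (k : ℤ) :
    symbolCoeff (fun _ => c) k = if k = 0 then c else 0 := by
  have h := symbolCoeff_eval (C c) k
  simp only [eval_C, coeff_C, Int.natAbs_eq_zero] at h
  grind

lemma continuous_comp_toCircle {T : ℝ} {f : ℂ → ℂ} (hf : ContinuousOn f (sphere 0 1)) :
    Continuous fun x : AddCircle T => f x.toCircle :=
  hf.comp_continuous (by fun_prop) fun x => x.toCircle.2

lemma symbolCoeff_sum {ι : Type*} (s : Finset ι) {f : ι → ℂ → ℂ}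
    (hf : ∀ i ∈ s, ContinuousOn (f i) (sphere 0 1)) (k : ℤ) :
    symbolCoeff (fun w => ∑ i ∈ s, f i w) k = ∑ i ∈ s, symbolCoeff (f i) k := by
  simp only [symbolCoeff_eq_fourierCoeff]
  rw [← Finset.sum_apply, ← fourierCoeff.sum]
  · congr! 1
    ext x
    rw [Finset.sum_apply]
  · exact fun i hi => (continuous_comp_toCircle (hf i hi)).integrable_of_hasCompactSupport
      (HasCompactSupport.of_compactSpace _)

lemma sum_norm_sq_symbolCoeff_le {f : ℂ → ℂ} (hf : ContinuousOn f (sphere 0 1)) (s : Finset ℤ) :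
    ∑ k ∈ s, ‖symbolCoeff f k‖ ^ 2 ≤ Real.circleAverage (fun w => ‖f w‖ ^ 2) 0 1 := by
  let F : C(AddCircle (2 * π), ℂ) := ⟨_, continuous_comp_toCircle hf⟩
  have hF : HasSum (fun k => ‖symbolCoeff f k‖ ^ 2) (∫ x, ‖F x‖ ^ 2 ∂haarAddCircle) := by
    convert hasSum_sq_fourierCoeff (F.toLp 2 haarAddCircle ℂ) using 1
    · simp only [fourierCoeff_toLp, symbolCoeff_eq_fourierCoeff]; rfl
    · refine integral_congr_ae ?_
      filter_upwards [F.coeFn_toLp (p := 2) (𝕜 := ℂ) haarAddCircle] with x hx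
      rw [hx]
  have hF' : ∫ x, ‖F x‖ ^ 2 ∂haarAddCircle = Real.circleAverage (fun w => ‖f w‖ ^ 2) 0 1 := by
    rw [integral_haarAddCircle, Real.circleAverage, ← AddCircle.intervalIntegral_preimage (2 * π) 0]
    simp [F, toCircle, circleMap]
  rw [← hF']
  exact sum_le_hasSum s (fun _ _ => by positivity) hF

end Fourier

section Toeplitz

/-- The `N × N` Toeplitz matrix of a symbol on the unit circle, whose determinant is
`toeplitzDet`. -/
noncomputable def toeplitzMatrix (t : ℂ → ℂ) (N : ℕ) : Matrix (Fin N) (Fin N) ℂ :=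
  of fun m n => symbolCoeff t ((m : ℤ) - n)

lemma toeplitzMatrix_congr {s t : ℂ → ℂ} (h : Set.EqOn s t (sphere 0 1)) (N : ℕ) :
    toeplitzMatrix s N = toeplitzMatrix t N := by
  simp only [toeplitzMatrix, symbolCoeff_congr h]

lemma toeplitzMatrix_neg (t : ℂ → ℂ) (N : ℕ) :
    toeplitzMatrix (fun w => -t w) N = -toeplitzMatrix t N := by
  ext m n
  exact symbolCoeff_neg t _

lemma conjTranspose_toeplitzMatrix (t : ℂ → ℂ) (N : ℕ) :
    (toeplitzMatrix t N)ᴴ = toeplitzMatrix (fun w => star (t w)) N := by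
  ext m n
  simp only [toeplitzMatrix, conjTranspose_apply, of_apply, symbolCoeff_star, neg_sub]

variable {t : ℂ → ℂ} {N : ℕ}

lemma toeplitzMatrix_mulVec_degreeLTEquiv (ht : ContinuousOn t (sphere 0 1)) (p : degreeLT ℂ N)
    (m : Fin N) :
    (toeplitzMatrix t N *ᵥ degreeLTEquiv ℂ N p) m =
      symbolCoeff (fun w => t w * (p : ℂ[X]).eval w) m := by
  have hterm (n : Fin N) :
      ContinuousOn (fun w => t w * (degreeLTEquiv ℂ N p n * w ^ (n : ℕ))) (sphere 0 1) :=
    ht.mul (by fun_prop)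
  simp only [eval_eq_sum_degreeLTEquiv p.2, Finset.mul_sum, symbolCoeff_sum _ fun n _ => hterm n,
    symbolCoeff_mul_const_mul_pow]
  rfl

lemma toeplitzMatrix_mulVec_degreeLTEquiv_eq (ht : ContinuousOn t (sphere 0 1))
    {p q : degreeLT ℂ N} (h : ∀ w ∈ sphere 0 1, t w * (p : ℂ[X]).eval w = (q : ℂ[X]).eval w) :
    toeplitzMatrix t N *ᵥ degreeLTEquiv ℂ N p = degreeLTEquiv ℂ N q := by
  ext m
  rw [toeplitzMatrix_mulVec_degreeLTEquiv ht, symbolCoeff_congr h, symbolCoeff_eval]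
  simp [degreeLTEquiv]

lemma sum_norm_sq_degreeLTEquiv (p : degreeLT ℂ N) :
    ∑ n, ‖degreeLTEquiv ℂ N p n‖ ^ 2 =
      Real.circleAverage (fun w => ‖(p : ℂ[X]).eval w‖ ^ 2) 0 1 := by
  have hsupp : (p : ℂ[X]).support ⊆ Finset.range N := fun n hn =>
    Finset.mem_range.mpr <| WithBot.coe_lt_coe.mp <|
      (le_degree_of_mem_supp n hn).trans_lt (mem_degreeLT.mp p.2)
  calc ∑ n, ‖degreeLTEquiv ℂ N p n‖ ^ 2 = ∑ n ∈ Finset.range N, ‖(p : ℂ[X]).coeff n‖ ^ 2 :=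
      Fin.sum_univ_eq_sum_range (fun n => ‖(p : ℂ[X]).coeff n‖ ^ 2) N
    _ = ∑ n ∈ (p : ℂ[X]).support, ‖(p : ℂ[X]).coeff n‖ ^ 2 :=
      (Finset.sum_subset hsupp fun n _ hn => by simp [notMem_support_iff.mp hn]).symm
    _ = _ := sum_sq_norm_coeff_eq_circleAverage _

lemma sum_norm_sq_toeplitzMatrix_mulVec_le (ht : ContinuousOn t (sphere 0 1)) {C : ℝ}
    (hC : ∀ w ∈ sphere 0 1, ‖t w‖ ≤ C) (v : Fin N → ℂ) :
    ∑ m, ‖(toeplitzMatrix t N *ᵥ v) m‖ ^ 2 ≤ C ^ 2 * ∑ n, ‖v n‖ ^ 2 := by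
  obtain ⟨p, rfl⟩ := (degreeLTEquiv ℂ N).surjective v
  have htp : ContinuousOn (fun w => t w * (p : ℂ[X]).eval w) (sphere 0 1) := ht.mul (by fun_prop)
  let emb : Fin N ↪ ℤ := Fin.valEmbedding.trans Nat.castEmbedding
  calc ∑ m, ‖(toeplitzMatrix t N *ᵥ degreeLTEquiv ℂ N p) m‖ ^ 2
      = ∑ k ∈ Finset.univ.map emb, ‖symbolCoeff (fun w => t w * (p : ℂ[X]).eval w) k‖ ^ 2 := by
        simp [emb, toeplitzMatrix_mulVec_degreeLTEquiv ht]
    _ ≤ Real.circleAverage (fun w => ‖t w * (p : ℂ[X]).eval w‖ ^ 2) 0 1 :=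
      sum_norm_sq_symbolCoeff_le htp _
    _ ≤ Real.circleAverage (fun w => C ^ 2 * ‖(p : ℂ[X]).eval w‖ ^ 2) 0 1 := by
      refine Real.circleAverage_mono (ContinuousOn.circleIntegrable' ?_)
        (ContinuousOn.circleIntegrable' (by fun_prop)) fun w hw => ?_
      · rw [abs_one]
        fun_prop
      · rw [norm_mul, mul_pow]
        gcongr
        exact hC w (by simpa using hw)
    _ = C ^ 2 * ∑ n, ‖degreeLTEquiv ℂ N p n‖ ^ 2 := by
      simp only [sum_norm_sq_degreeLTEquiv, ← smul_eq_mul, Real.circleAverage_fun_smul]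

lemma norm_toeplitzMatrix_le (ht : ContinuousOn t (sphere 0 1)) {C : ℝ}
    (hC : ∀ w ∈ sphere 0 1, ‖t w‖ ≤ C) : ‖toeplitzMatrix t N‖ ≤ C := by
  have hC0 : 0 ≤ C := (norm_nonneg _).trans (hC 1 (by simp))
  refine ContinuousLinearMap.opNorm_le_bound _ hC0 fun v => ?_
  rw [← sq_le_sq₀ (by positivity) (by positivity), mul_pow, EuclideanSpace.norm_sq_eq,
    EuclideanSpace.norm_sq_eq]
  exact sum_norm_sq_toeplitzMatrix_mulVec_le ht hC v.ofLp

lemma mul_mem_degreeLT {R : Type*} [Semiring R] {d : ℕ} {P r : R[X]} (hP : P.natDegree ≤ d)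
    (hr : r ∈ degreeLT R (N - d)) : P * r ∈ degreeLT R N := by
  rcases eq_or_ne r 0 with rfl | hr0
  · simp
  rw [mem_degreeLT, ← natDegree_lt_iff_degree_lt hr0] at hr
  exact mem_degreeLT.mpr <| degree_le_natDegree.trans_lt <| by
    exact_mod_cast natDegree_mul_le.trans_lt (by omega)

/-- The kernel of `1 - T_N(t) T_N(s)` contains the coefficient vectors of all multiples of `P`. -/
lemma rank_one_sub_toeplitzMatrix_mul_le {s : ℂ → ℂ} {d : ℕ} {P Q : ℂ[X]}
    (hs : ContinuousOn s (sphere 0 1)) (ht : ContinuousOn t (sphere 0 1))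
    (hsP : ∀ w ∈ sphere 0 1, s w * P.eval w = Q.eval w)
    (htQ : ∀ w ∈ sphere 0 1, t w * Q.eval w = P.eval w)
    (hP0 : P ≠ 0) (hP : P.natDegree ≤ d) (hQ : Q.natDegree ≤ d) (hN : d ≤ N) :
    (1 - toeplitzMatrix t N * toeplitzMatrix s N).rank ≤ d := by
  let M := 1 - toeplitzMatrix t N * toeplitzMatrix s N
  let φ : degreeLT ℂ (N - d) →ₗ[ℂ] degreeLT ℂ N :=
    (LinearMap.mulLeft ℂ P).restrict fun r hr => mul_mem_degreeLT hP hr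
  let ψ : degreeLT ℂ (N - d) →ₗ[ℂ] Fin N → ℂ := (degreeLTEquiv ℂ N).toLinearMap ∘ₗ φ
  have hψ : Function.Injective ψ := (degreeLTEquiv ℂ N).injective.comp fun r r' h =>
    Subtype.ext (mul_left_cancel₀ hP0 (congrArg Subtype.val h))
  have hker : LinearMap.range ψ ≤ LinearMap.ker M.mulVecLin := by
    rintro _ ⟨r, rfl⟩
    let Qr : degreeLT ℂ N := ⟨Q * r, mul_mem_degreeLT hQ r.2⟩
    have hsψ : toeplitzMatrix s N *ᵥ ψ r = degreeLTEquiv ℂ N Qr :=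
      toeplitzMatrix_mulVec_degreeLTEquiv_eq hs fun w hw => by
        change s w * (P * r).eval w = (Q * r).eval w
        rw [eval_mul, eval_mul, ← mul_assoc, hsP w hw]
    have htψ : toeplitzMatrix t N *ᵥ degreeLTEquiv ℂ N Qr = ψ r :=
      toeplitzMatrix_mulVec_degreeLTEquiv_eq ht fun w hw => by
        change t w * (Q * r).eval w = (P * r).eval w
        rw [eval_mul, eval_mul, ← mul_assoc, htQ w hw]
    rw [LinearMap.mem_ker, mulVecLin_apply, sub_mulVec, one_mulVec, ← mulVec_mulVec, hsψ, htψ,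
      sub_self]
  have hdim : N - d ≤ Module.finrank ℂ (LinearMap.ker M.mulVecLin) := by
    simpa [LinearMap.finrank_range_of_inj hψ, (degreeLTEquiv ℂ _).finrank_eq]
      using Submodule.finrank_mono hker
  have hrank := M.mulVecLin.finrank_range_add_finrank_ker
  rw [Module.finrank_fin_fun] at hrank
  change Module.finrank ℂ (LinearMap.range M.mulVecLin) ≤ d
  omega

end Toeplitz

section LinearAlgebra

variable {n R 𝕜 : Type*} [Fintype n] [DecidableEq n] [CommRing R] [RCLike 𝕜]

lemma det_fromBlocks_smul_one_mul_pow (c : R) (A B : Matrix n n R) :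
    (fromBlocks (c • 1) A B (c • 1)).det * c ^ Fintype.card n =
      (c ^ 2 • 1 - A * B).det * c ^ Fintype.card n := by
  have hmul : fromBlocks (c • 1) A B (c • 1) * fromBlocks (c • 1) 0 (-B) 1 =
      fromBlocks (c ^ 2 • 1 - A * B) A 0 (c • 1) := by
    simp [fromBlocks_multiply, pow_two, smul_smul, sub_eq_add_neg]
  simpa using congrArg det hmul

lemma det_fromBlocks_smul_one (c : R) (A B : Matrix n n R) :
    (fromBlocks (c • 1) A B (c • 1)).det = (c ^ 2 • 1 - A * B).det := by
  -- The identity holds after multiplication by a power of `c`, hence for the regular element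
  -- `c = X` of `R[X]`.
  have hX : (fromBlocks ((X : R[X]) • 1) (A.map C) (B.map C) (X • 1)).det =
      (X ^ 2 • 1 - A.map C * B.map C).det :=
    (isRegular_X_pow (Fintype.card n)).right (det_fromBlocks_smul_one_mul_pow _ _ _)
  have h := congrArg (evalRingHom c) hX
  rw [RingHom.map_det, RingHom.map_det] at h
  convert h using 2
  · ext (i | i) (j | j) <;> simp [one_apply, apply_ite (eval c)]
  · ext i j
    simp [one_apply, mul_apply, eval_finsetSum, apply_ite (eval c)]

lemma exists_charpoly_eq_of_rank_le {B : Matrix n n 𝕜} (hB : B.IsHermitian) {d : ℕ}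
    (hrank : B.rank ≤ d) (hd : d ≤ Fintype.card n) :
    ∃ y : Fin d → ℝ, (∀ j, y j ∈ spectrum ℝ B) ∧
      B.charpoly = X ^ (Fintype.card n - d) * ∏ j, (X - C (y j : 𝕜)) := by
  rw [hB.rank_eq_card_non_zero_eigs, Fintype.card_subtype] at hrank
  obtain ⟨s, hsupp, hs⟩ := Finset.exists_superset_card_eq hrank hd
  let e : Fin d ≃ s := (Fintype.equivFinOfCardEq (by simpa using hs)).symm
  refine ⟨fun j => hB.eigenvalues (e j), fun j => hB.eigenvalues_mem_spectrum_real _, ?_⟩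
  have hcompl : ∏ i ∈ sᶜ, (X - C (hB.eigenvalues i : 𝕜)) = X ^ (Fintype.card n - d) := by
    rw [← hs, ← Finset.card_compl, ← Finset.prod_const]
    refine Finset.prod_congr rfl fun i hi => ?_
    have hi0 : hB.eigenvalues i = 0 := by
      by_contra h
      exact Finset.mem_compl.mp hi (hsupp (by simpa using h))
    simp [hi0]
  rw [hB.charpoly_eq, ← Finset.prod_compl_mul_prod s, hcompl, ← Finset.prod_coe_sort s,
    ← e.prod_comp]

open scoped ComplexOrder in
lemma spectrum_mul_conjTranspose_subset_Icc {T : Matrix n n 𝕜} (hT : ‖T‖ ≤ 1) :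
    spectrum ℝ (T * Tᴴ) ⊆ Set.Icc 0 1 := by
  intro x hx
  have hx' : (x : 𝕜) ∈ spectrum 𝕜 (T * Tᴴ) := spectrum.algebraMap_mem 𝕜 hx
  have hx0 : (0 : 𝕜) ≤ x :=
    (posSemidef_iff_isHermitian_and_spectrum_nonneg.mp (posSemidef_self_mul_conjTranspose T)).2 hx'
  have hone : ‖(1 : Matrix n n 𝕜)‖ ≤ 1 := by
    rw [← diagonal_one, l2_opNorm_diagonal]
    exact (pi_norm_const_le 1).trans_eq norm_one
  have hnorm : ‖T * Tᴴ‖ ≤ 1 := by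
    refine (l2_opNorm_mul T Tᴴ).trans ?_
    rw [l2_opNorm_conjTranspose]
    exact mul_le_one₀ hT (norm_nonneg T) hT
  refine ⟨RCLike.ofReal_nonneg.mp hx0, (le_abs_self x).trans ?_⟩
  rw [← RCLike.norm_ofReal (K := 𝕜)]
  exact (spectrum.norm_le_norm_mul_of_mem hx').trans (mul_le_one₀ hnorm (norm_nonneg _) hone)

lemma exists_det_mul_conjTranspose_sub_smul_one {T : Matrix n n 𝕜} (hT : ‖T‖ ≤ 1) {d : ℕ}
    (hrank : (1 - T * Tᴴ).rank ≤ d) (hd : d ≤ Fintype.card n) :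
    ∃ x : Fin d → ℝ, (∀ j, x j ∈ Set.Icc 0 1) ∧
      ∀ c : 𝕜, (T * Tᴴ - c • 1).det = (1 - c) ^ (Fintype.card n - d) * ∏ j, ((x j : 𝕜) - c) := by
  obtain ⟨y, hy, hchar⟩ := exists_charpoly_eq_of_rank_le
    (isHermitian_one.sub (isHermitian_mul_conjTranspose_self T)) hrank hd
  refine ⟨fun j => 1 - y j, fun j => ?_, fun c => ?_⟩
  · have hyj := hy j
    rw [← map_one (algebraMap ℝ (Matrix n n 𝕜)), ← spectrum.singleton_sub_eq] at hyj
    obtain ⟨_, rfl, x, hx, hxy⟩ := hyj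
    have hx01 := spectrum_mul_conjTranspose_subset_Icc hT hx
    simpa [← hxy] using hx01
  · have hshift : T * Tᴴ - c • 1 = scalar n (1 - c) - (1 - T * Tᴴ) := by
      rw [scalar_apply, ← smul_one_eq_diagonal]
      module
    rw [hshift, ← eval_charpoly, hchar]
    simp [eval_prod, sub_right_comm]

end LinearAlgebra

section BlockToeplitz

lemma blockToeplitzDet_of_diag_const (c : ℂ) (s t : ℂ → ℂ) (N : ℕ) :
    blockToeplitzDet (fun w => !![c, t w; s w, c]) N =
      (c ^ 2 • 1 - toeplitzMatrix t N * toeplitzMatrix s N).det := by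
  let e : Fin N × Fin 2 ≃ Fin N ⊕ Fin N :=
    (Equiv.prodComm _ _).trans
      ((finTwoEquiv.prodCongr (Equiv.refl _)).trans (Equiv.boolProdEquivSum _))
  have hblocks : (of fun p q : Fin N × Fin 2 =>
      blockSymbolCoeff (fun w => !![c, t w; s w, c]) ((p.1 : ℤ) - q.1) p.2 q.2) =
      (fromBlocks (c • 1) (toeplitzMatrix t N) (toeplitzMatrix s N) (c • 1)).submatrix e e := by
    ext ⟨m, i⟩ ⟨n, j⟩
    fin_cases i <;> fin_cases j <;>
      simp [e, blockSymbolCoeff, toeplitzMatrix, symbolCoeff_const, one_apply, sub_eq_zero,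
        Fin.val_inj, finTwoEquiv]
  rw [blockToeplitzDet, hblocks, det_submatrix_equiv_self, det_fromBlocks_smul_one]

lemma exists_blockToeplitzDet_eq_of_mul_eval_eq {t : ℂ → ℂ} {P Q : ℂ[X]} {d N : ℕ}
    (ht : ContinuousOn t (sphere 0 1)) (hnorm : ∀ w ∈ sphere 0 1, ‖t w‖ = 1)
    (hinv : ∀ w ∈ sphere 0 1, t w⁻¹ = star (t w))
    (htQ : ∀ w ∈ sphere 0 1, t w * Q.eval w = P.eval w)
    (hP0 : P ≠ 0) (hP : P.natDegree ≤ d) (hQ : Q.natDegree ≤ d) (hN : d ≤ N) :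
    ∃ x : Fin d → ℝ, (∀ j, 0 ≤ x j ∧ x j ≤ 1) ∧ ∀ lam : ℂ,
      blockToeplitzDet
        (fun w => !![Complex.I * lam, t w; -(t w⁻¹), Complex.I * lam]) N
        = (1 - lam ^ 2) ^ (N - d) * ∏ j, ((x j : ℂ) - lam ^ 2) := by
  have hsP : ∀ w ∈ sphere 0 1, star (t w) * P.eval w = Q.eval w := fun w hw => by
    rw [← htQ w hw, ← mul_assoc, Complex.star_def, Complex.conj_mul', hnorm w hw]
    simp
  have hrank : (1 - toeplitzMatrix t N * (toeplitzMatrix t N)ᴴ).rank ≤ d := by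
    rw [conjTranspose_toeplitzMatrix]
    exact rank_one_sub_toeplitzMatrix_mul_le (by fun_prop) ht hsP htQ hP0 hP hQ hN
  have hcontr : ‖toeplitzMatrix t N‖ ≤ 1 := norm_toeplitzMatrix_le ht fun w hw => (hnorm w hw).le
  obtain ⟨x, hx, hdet⟩ :=
    exists_det_mul_conjTranspose_sub_smul_one hcontr hrank (by simpa using hN)
  refine ⟨x, hx, fun lam => ?_⟩
  let T := toeplitzMatrix t N
  have hneg : toeplitzMatrix (fun w => -(t w⁻¹)) N = -Tᴴ := by
    rw [conjTranspose_toeplitzMatrix, ← toeplitzMatrix_neg]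
    exact toeplitzMatrix_congr (fun w hw => congrArg Neg.neg (hinv w hw)) N
  calc blockToeplitzDet (fun w => !![Complex.I * lam, t w; -(t w⁻¹), Complex.I * lam]) N
      = ((Complex.I * lam) ^ 2 • 1 - T * -Tᴴ).det := by rw [blockToeplitzDet_of_diag_const, hneg]
    _ = (T * Tᴴ - lam ^ 2 • 1).det := by
      rw [mul_pow, Complex.I_sq, mul_neg]
      congr 1
      module
    _ = _ := by simpa using hdet (lam ^ 2)

end BlockToeplitz

section PhaseSymbol

/-- The symbol `w ^ k * F(w) / F(w⁻¹)`. When `F` has real coefficients, its value at a point of the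
unit circle is the phase of `w ^ k * F(w) ^ 2`. -/
noncomputable def phaseSymbol (F : ℂ[X]) (k : ℤ) (w : ℂ) : ℂ :=
  w ^ k * F.eval w / F.eval w⁻¹

variable {F : ℂ[X]}

lemma phaseSymbol_inv (F : ℂ[X]) (k : ℤ) (w : ℂ) :
    phaseSymbol F k w⁻¹ = (phaseSymbol F k w)⁻¹ := by
  simp [phaseSymbol, div_eq_mul_inv, mul_comm, mul_left_comm, mul_assoc]

lemma inv_mem_sphere_zero_one {w : ℂ} (hw : w ∈ sphere (0 : ℂ) 1) : w⁻¹ ∈ sphere (0 : ℂ) 1 := by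
  simpa using hw

lemma continuousOn_phaseSymbol (hF0 : ∀ w ∈ sphere 0 1, F.eval w ≠ 0) (k : ℤ) :
    ContinuousOn (phaseSymbol F k) (sphere 0 1) := by
  have hne : ∀ w ∈ sphere (0 : ℂ) 1, w ≠ 0 := fun w hw => ne_of_mem_sphere hw one_ne_zero
  have hinv : ContinuousOn (fun w : ℂ => w⁻¹) (sphere 0 1) := continuousOn_id.inv₀ hne
  exact ((continuousOn_id.zpow₀ k fun w hw => .inl (hne w hw)).mul F.continuousOn).div
    (F.continuous.comp_continuousOn hinv) fun w hw => hF0 _ (inv_mem_sphere_zero_one hw)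

lemma norm_phaseSymbol (hF : F.map (starRingEnd ℂ) = F) (hF0 : ∀ w ∈ sphere 0 1, F.eval w ≠ 0)
    (k : ℤ) {w : ℂ} (hw : w ∈ sphere 0 1) : ‖phaseSymbol F k w‖ = 1 := by
  have hw1 : ‖w‖ = 1 := by simpa using hw
  have hconj : F.eval w⁻¹ = starRingEnd ℂ (F.eval w) := by
    rw [Complex.inv_eq_conj hw1, ← eval_map_apply, hF]
  simp [phaseSymbol, hconj, hw1, hF0 w hw]

lemma phaseSymbol_mul_eval_reverse {k : ℤ} {w : ℂ} (hw : w ≠ 0) (hF : F.eval w⁻¹ ≠ 0) :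
    phaseSymbol F k w * F.reverse.eval w = w ^ (k + F.natDegree) * F.eval w := by
  have : Invertible w⁻¹ := invertibleOfNonzero (inv_ne_zero hw)
  have hrev := eval₂_reverse_mul_pow (RingHom.id ℂ) w⁻¹ F
  simp only [invOf_eq_inv, inv_inv, inv_pow] at hrev
  change F.reverse.eval w * (w ^ F.natDegree)⁻¹ = F.eval w⁻¹ at hrev
  rw [zpow_add₀ hw, zpow_natCast, phaseSymbol, div_mul_eq_mul_div, div_eq_iff hF, ← hrev]
  field_simp

lemma exists_blockToeplitzDet_eq_of_eqOn_phaseSymbol {t : ℂ → ℂ} {k : ℤ} {d N : ℕ}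
    (ht : Set.EqOn t (phaseSymbol F k) (sphere 0 1)) (hF : F.map (starRingEnd ℂ) = F)
    (hF0 : ∀ w ∈ sphere 0 1, F.eval w ≠ 0)
    (hd : (k + F.natDegree).natAbs + F.natDegree ≤ d) (hN : d ≤ N) :
    ∃ x : Fin d → ℝ, (∀ j, 0 ≤ x j ∧ x j ≤ 1) ∧ ∀ lam : ℂ,
      blockToeplitzDet
        (fun w => !![Complex.I * lam, t w; -(t w⁻¹), Complex.I * lam]) N
        = (1 - lam ^ 2) ^ (N - d) * ∏ j, ((x j : ℂ) - lam ^ 2) := by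
  have hnorm : ∀ w ∈ sphere 0 1, ‖t w‖ = 1 := fun w hw => by
    rw [ht hw, norm_phaseSymbol hF hF0 k hw]
  have hinv : ∀ w ∈ sphere 0 1, t w⁻¹ = star (t w) := fun w hw => by
    rw [Complex.star_def, ← Complex.inv_eq_conj (hnorm w hw), ht hw,
      ht (inv_mem_sphere_zero_one hw), phaseSymbol_inv]
  let m := k + F.natDegree
  refine exists_blockToeplitzDet_eq_of_mul_eval_eq
    (P := X ^ m.toNat * F) (Q := X ^ (-m).toNat * F.reverse)
    ((continuousOn_phaseSymbol hF0 k).congr ht) hnorm hinv (fun w hw => ?_) ?_ ?_ ?_ hN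
  · have hw0 : w ≠ 0 := ne_of_mem_sphere hw one_ne_zero
    have hm : w ^ (-m).toNat * w ^ m = w ^ m.toNat := by
      rw [← zpow_natCast, ← zpow_natCast, ← zpow_add₀ hw0]
      congr 1
      omega
    rw [eval_mul, eval_mul, eval_X_pow, eval_X_pow, mul_left_comm, ht hw,
      phaseSymbol_mul_eval_reverse hw0 (hF0 _ (inv_mem_sphere_zero_one hw)), ← mul_assoc, hm]
  · refine mul_ne_zero (by simp) ?_
    rintro rfl
    exact hF0 1 (by simp) eval_zero
  · refine natDegree_mul_le.trans ?_
    rw [natDegree_X_pow]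
    omega
  · have hrev := reverse_natDegree_le F
    refine natDegree_mul_le.trans ?_
    rw [natDegree_X_pow]
    omega

end PhaseSymbol

section BDI

variable {nz nZ : ℕ} {z : Fin nz → ℂ} {Z : Fin nZ → ℂ}

lemma bdiSymbol_eq_phaseSymbol (hZ : ∀ k, Z k ≠ 0) (nP α : ℤ) {w : ℂ} (hw : w ≠ 0) :
    bdiSymbol nP nz nZ z Z α w =
      phaseSymbol ((∏ j, (X - C (z j))) * ∏ k, (X - C (Z k))) (-(nP + α)) w := by
  have hz_prod : ∏ j, (1 - w * z j) = w ^ nz * ∏ j, (w⁻¹ - z j) := by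
    rw [← Fin.prod_const, ← Finset.prod_mul_distrib]
    exact Finset.prod_congr rfl fun j _ => by field_simp
  have hZ_prod : (∏ k, (-Z k)) * ∏ k, (w - (Z k)⁻¹) = w ^ nZ * ∏ k, (w⁻¹ - Z k) := by
    rw [← Fin.prod_const, ← Finset.prod_mul_distrib, ← Finset.prod_mul_distrib]
    refine Finset.prod_congr rfl fun k _ => ?_
    field_simp [hZ k]
    ring
  have hpow : w ^ ((nz : ℤ) + nZ - nP - α) = w ^ nz * w ^ nZ * w ^ (-(nP + α)) := by
    rw [← zpow_natCast, ← zpow_natCast, ← zpow_add₀ hw, ← zpow_add₀ hw]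
    congr 1
    ring
  calc bdiSymbol nP nz nZ z Z α w
      = w ^ ((nz : ℤ) + nZ - nP - α) * ((∏ j, (w - z j)) * ∏ k, (w - Z k)) /
          ((∏ j, (1 - w * z j)) * ((∏ k, (-Z k)) * ∏ k, (w - (Z k)⁻¹))) := by
        simp only [bdiSymbol, div_eq_mul_inv, mul_inv]
        ring
    _ = w ^ (-(nP + α)) * ((∏ j, (w - z j)) * ∏ k, (w - Z k)) /
          ((∏ j, (w⁻¹ - z j)) * ∏ k, (w⁻¹ - Z k)) := by
        rw [hz_prod, hZ_prod, hpow, mul_mul_mul_comm (w ^ nz), mul_assoc (w ^ nz * w ^ nZ),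
          mul_div_mul_left _ _ (by simp [hw])]
    _ = _ := by simp [phaseSymbol, eval_prod]

lemma map_starRingEnd_prod_X_sub_C {ι : Type*} [Fintype ι] {ζ : ι → ℂ} {σ : Equiv.Perm ι}
    (hσ : ∀ i, ζ (σ i) = starRingEnd ℂ (ζ i)) :
    (∏ i, (X - C (ζ i))).map (starRingEnd ℂ) = ∏ i, (X - C (ζ i)) := by
  simp only [Polynomial.map_prod, Polynomial.map_sub, map_X, map_C, ← hσ]
  exact Equiv.prod_comp σ fun i => X - C (ζ i)

theorem bdi_correlation_matrix_char_poly_general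
    (nP α : ℤ) (hz : ∀ j, ‖z j‖ ≠ 1) (hZ : ∀ k, Z k ≠ 0 ∧ ‖Z k‖ ≠ 1)
    (hconjz : ∃ σ : Equiv.Perm (Fin nz), ∀ j, z (σ j) = (starRingEnd ℂ) (z j))
    (hconjZ : ∃ σ : Equiv.Perm (Fin nZ), ∀ k, Z (σ k) = (starRingEnd ℂ) (Z k))
    {d N : ℕ} (hd : ((nz : ℤ) + nZ - nP - α).natAbs + (nz + nZ) ≤ d) (hN : d ≤ N) :
    ∃ x : Fin d → ℝ, (∀ j, 0 ≤ x j ∧ x j ≤ 1) ∧ ∀ lam : ℂ,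
      blockToeplitzDet
        (fun w => !![Complex.I * lam, bdiSymbol nP nz nZ z Z α w;
                     -(bdiSymbol nP nz nZ z Z α w⁻¹), Complex.I * lam]) N
        = (1 - lam ^ 2) ^ (N - d) * ∏ j, ((x j : ℂ) - lam ^ 2) := by
  obtain ⟨σ, hσ⟩ := hconjz
  obtain ⟨τ, hτ⟩ := hconjZ
  have hsymbol : Set.EqOn (bdiSymbol nP nz nZ z Z α)
      (phaseSymbol ((∏ j, (X - C (z j))) * ∏ k, (X - C (Z k))) (-(nP + α))) (sphere 0 1) :=
    fun w hw => bdiSymbol_eq_phaseSymbol (fun k => (hZ k).1) nP α (ne_of_mem_sphere hw one_ne_zero)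
  refine exists_blockToeplitzDet_eq_of_eqOn_phaseSymbol hsymbol ?_ (fun w hw => ?_) ?_ hN
  · rw [Polynomial.map_mul, map_starRingEnd_prod_X_sub_C hσ, map_starRingEnd_prod_X_sub_C hτ]
  · have hoff {a : ℂ} (ha : ‖a‖ ≠ 1) : w - a ≠ 0 := by
      intro h
      exact ha (by simpa [sub_eq_zero.mp h] using hw)
    simp [eval_prod, Finset.prod_ne_zero_iff, hoff, hz, hZ]
  · rw [(monic_prod_X_sub_C z _).natDegree_mul (monic_prod_X_sub_C Z _)]
    simp only [natDegree_finsetProd_X_sub_C_eq_card, Finset.card_univ, Fintype.card_fin]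
    omega

end BDI

/-- Corollary 2: the characteristic polynomial of the BDI correlation matrix has the form
`(1 − λ²)^{N−d} ∏_{j=1}^d (x_j(N) − λ²)` with `d` independent of `N` and
`x_j(N) ∈ [0,1]`; in particular only finitely many correlation-matrix eigenvalues are
non-trivial. -/
theorem bdi_correlation_matrix_char_poly
    (nP : ℤ) (nz nZ : ℕ)
    (z : Fin nz → ℂ) (Z : Fin nZ → ℂ)
    (hz : ∀ j, 0 < ‖z j‖ ∧ ‖z j‖ < 1) (hZ : ∀ k, 1 < ‖Z k‖)
    (hconjz : ∃ σ : Equiv.Perm (Fin nz), ∀ j, z (σ j) = (starRingEnd ℂ) (z j))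
    (hconjZ : ∃ σ : Equiv.Perm (Fin nZ), ∀ k, Z (σ k) = (starRingEnd ℂ) (Z k)) :
    ∃ d : ℕ, ∀ N : ℕ, d ≤ N → ∃ x : Fin d → ℝ,
      (∀ j, 0 ≤ x j ∧ x j ≤ 1) ∧
      ∀ lam : ℂ,
        blockToeplitzDet
          (fun w => !![Complex.I * lam, bdiSymbol nP nz nZ z Z 0 w;
                       -(bdiSymbol nP nz nZ z Z 0 w⁻¹), Complex.I * lam]) N
          = (1 - lam ^ 2) ^ (N - d) * ∏ j, ((x j : ℂ) - lam ^ 2) := by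
  exact ⟨_, fun N hN => bdi_correlation_matrix_char_poly_general nP 0 (fun j => (hz j).2.ne)
    (fun k => ⟨norm_pos_iff.mp (one_pos.trans (hZ k)), (hZ k).ne'⟩) hconjz hconjZ le_rfl hN⟩
end
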